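/- Suppose L is a metric flag labeled triangulation of the 2-sphere. If D₁ and D₂ are Seifert subcomplexes of L and some Euclidean 4-circuit C of L is contained in both D₁ and D₂, then D₁ = D₂. -/

import Mathlib

open Geometry

/-- The ambient space for our simplicial complexes. -/
abbrev E3 : Type := EuclideanSpace ℝ (Fin 3)

noncomputable instance : DecidableEq E3 := Classical.decEq _

namespace CoxOrb

variable (L : SimplicialComplex ℝ E3) (m : E3 → E3 → ℕ)

/-- `L` is a labeled triangulation of the 2-sphere with edge labeling `m`:
`L` is finite, its underlying space is homeomorphic to the 2-sphere, and `m`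
is symmetric with `m s t ≥ 2` on every edge `{s, t}` of `L`. -/
structure IsLabeledS2 : Prop where
  finite : L.faces.Finite
  sphere : Nonempty (L.space ≃ₜ (Metric.sphere (0 : E3) 1 : Set E3))
  symm : ∀ s t : E3, m s t = m t s
  two_le : ∀ s t : E3, s ≠ t → ({s, t} : Finset E3) ∈ L.faces → 2 ≤ m s t

/-- `L` with labeling `m` is metric flag: three pairwise-joined vertices span a
2-simplex iff the corresponding angle sum `π/m_st + π/m_tu + π/m_us` exceeds `π`. -/
def MetricFlag : Prop :=
  ∀ s t u : E3, s ≠ t → t ≠ u → s ≠ u →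
    ({s, t} : Finset E3) ∈ L.faces → ({t, u} : Finset E3) ∈ L.faces →
    ({s, u} : Finset E3) ∈ L.faces →
    (({s, t, u} : Finset E3) ∈ L.faces ↔
      1 / (m s t : ℝ) + 1 / (m t u : ℝ) + 1 / (m u s : ℝ) > 1)

/-- The link of a vertex `s`, as a set of faces of `L`. -/
def link (s : E3) : Set (Finset E3) :=
  {F | F ∈ L.faces ∧ s ∉ F ∧ insert s F ∈ L.faces}

/-- The closed star of a vertex `s`: all faces of `L` contained in some face
containing `s`. -/
def star (s : E3) : Set (Finset E3) :=
  {F | F ∈ L.faces ∧ ∃ G ∈ L.faces, s ∈ G ∧ F ⊆ G}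

/-- The vertices of the link of `s`. -/
def linkVerts (s : E3) : Set E3 :=
  {v | v ≠ s ∧ ({s, v} : Finset E3) ∈ L.faces}

/-- A set of faces `A` is a full subcomplex of `L`: every face of `L` all of
whose vertices are vertices of `A` belongs to `A`. -/
def IsFullSubcomplex (A : Set (Finset E3)) : Prop :=
  A ⊆ L.faces ∧ ∀ F ∈ L.faces, (∀ v ∈ F, ({v} : Finset E3) ∈ A) → F ∈ A

/-- `s` is a 3-Euclidean vertex of `L`: it has valence three and the labels on
the three edges of its link have reciprocals summing to one. -/
def IsThreeEuclidean (s : E3) : Prop :=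
  ({s} : Finset E3) ∈ L.faces ∧
  ∃ s₀ s₁ s₂ : E3, s₀ ≠ s₁ ∧ s₁ ≠ s₂ ∧ s₀ ≠ s₂ ∧
    linkVerts L s = {s₀, s₁, s₂} ∧
    1 / (m s₀ s₁ : ℝ) + 1 / (m s₁ s₂ : ℝ) + 1 / (m s₂ s₀ : ℝ) = 1

/-- `s` is a 4-Euclidean vertex of `L`: it has valence four, its link is the
4-circuit on `v 0, v 1, v 2, v 3` (in cyclic order), and the labels on the
edges of the link are all `2`. -/
def IsFourEuclidean (s : E3) : Prop :=
  ({s} : Finset E3) ∈ L.faces ∧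
  ∃ v : Fin 4 → E3, Function.Injective v ∧
    linkVerts L s = {v 0, v 1, v 2, v 3} ∧
    (∀ i : Fin 4, ({s, v i, v (i + 1)} : Finset E3) ∈ L.faces) ∧
    (∀ i : Fin 4, m (v i) (v (i + 1)) = 2)

/-- `L` is the boundary complex of a 3-simplex: four pairwise-joined vertices
spanning four 2-simplices. -/
def IsBoundaryOfThreeSimplex : Prop :=
  ∃ a b c d : E3, a ≠ b ∧ a ≠ c ∧ a ≠ d ∧ b ≠ c ∧ b ≠ d ∧ c ≠ d ∧
    (∀ v : E3, ({v} : Finset E3) ∈ L.faces ↔ v = a ∨ v = b ∨ v = c ∨ v = d) ∧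
    ({a, b, c} : Finset E3) ∈ L.faces ∧ ({a, b, d} : Finset E3) ∈ L.faces ∧
    ({a, c, d} : Finset E3) ∈ L.faces ∧ ({b, c, d} : Finset E3) ∈ L.faces

/-- `L` is the suspension of a 3-gon. -/
def IsSuspensionOfThreeGon : Prop :=
  ∃ t t' s₀ s₁ s₂ : E3, [t, t', s₀, s₁, s₂].Pairwise (· ≠ ·) ∧
    (∀ v : E3, ({v} : Finset E3) ∈ L.faces ↔ v = t ∨ v = t' ∨ v = s₀ ∨ v = s₁ ∨ v = s₂) ∧
    ({s₀, s₁} : Finset E3) ∈ L.faces ∧ ({s₁, s₂} : Finset E3) ∈ L.faces ∧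
    ({s₀, s₂} : Finset E3) ∈ L.faces ∧
    ({t, s₀} : Finset E3) ∈ L.faces ∧ ({t, s₁} : Finset E3) ∈ L.faces ∧
    ({t, s₂} : Finset E3) ∈ L.faces ∧
    ({t', s₀} : Finset E3) ∈ L.faces ∧ ({t', s₁} : Finset E3) ∈ L.faces ∧
    ({t', s₂} : Finset E3) ∈ L.faces ∧
    ({t, t'} : Finset E3) ∉ L.faces

/-- The simplicial join of the subcomplex `Z` with the two points `t, t'`. -/
def joinSusp (Z : Set (Finset E3)) (t t' : E3) : Set (Finset E3) :=
  Z ∪ {{t}, {t'}} ∪ ((fun F => insert t F) '' Z) ∪ ((fun F => insert t' F) '' Z)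

/-- `T` is the right-angled suspension in `L` of the subcomplex `Z` with
suspension points `t, t'` (not joined by an edge of `T`): every edge from a
suspension point to a vertex of `Z` is labeled `2`. -/
structure IsRASuspData (T Z : Set (Finset E3)) (t t' : E3) : Prop where
  subset : T ⊆ L.faces
  zsubset : Z ⊆ L.faces
  zdown : ∀ F ∈ Z, ∀ G : Finset E3, G ⊆ F → G.Nonempty → G ∈ Z
  znonempty : Z.Nonempty
  tne : t ≠ t'
  t_notin : ∀ F ∈ Z, t ∉ F
  t'_notin : ∀ F ∈ Z, t' ∉ F
  labels : ∀ v : E3, ({v} : Finset E3) ∈ Z → m t v = 2 ∧ m t' v = 2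
  eq : T = joinSusp Z t t'

/-- `T` is a right-angled suspension in `L`. -/
def IsRASusp (T : Set (Finset E3)) : Prop :=
  ∃ Z t t', IsRASuspData L m T Z t t'

/-- The base `Z` of the suspension is neither a single vertex nor a single
edge, so that the suspension is infinite. -/
def InfiniteBase (Z : Set (Finset E3)) : Prop :=
  (¬ ∃ v : E3, Z = {({v} : Finset E3)}) ∧
  (¬ ∃ u v : E3, u ≠ v ∧ Z = {({u} : Finset E3), ({v} : Finset E3), ({u, v} : Finset E3)})

/-- `T` is an infinite, maximal right-angled suspension in `L`: it is an
RA-suspension of a full subcomplex which is neither a vertex nor an edge, and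
`T` is not properly contained in another RA-suspension. -/
def IsInfMaxRASusp (T : Set (Finset E3)) : Prop :=
  (∃ Z t t', IsRASuspData L m T Z t t' ∧ InfiniteBase Z ∧ IsFullSubcomplex L Z) ∧
  ∀ T', IsRASusp L m T' → T ⊆ T' → T = T'

/-- `v 0, v 1, v 2, v 3` (in cyclic order) form a Euclidean 4-circuit of `L`:
all four edge labels are `2` and the circuit is not the boundary of the union
of two 2-simplices of `L` sharing an edge. -/
def IsEuclidean4Circuit (v : Fin 4 → E3) : Prop :=
  Function.Injective v ∧
  (∀ i : Fin 4, ({v i, v (i + 1)} : Finset E3) ∈ L.faces) ∧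
  (∀ i : Fin 4, m (v i) (v (i + 1)) = 2) ∧
  ¬ ((({v 0, v 1, v 2} : Finset E3) ∈ L.faces ∧ ({v 0, v 2, v 3} : Finset E3) ∈ L.faces) ∨
     (({v 1, v 2, v 3} : Finset E3) ∈ L.faces ∧ ({v 0, v 1, v 3} : Finset E3) ∈ L.faces))

/-- The subcomplex consisting of the vertices and edges of the 4-circuit `v`. -/
def circuitComplex (v : Fin 4 → E3) : Set (Finset E3) :=
  {F | (∃ i : Fin 4, F = {v i}) ∨ (∃ i : Fin 4, F = {v i, v (i + 1)})}

/-- `T` is the right-angled cone on a Euclidean 4-circuit: the closed star of a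
vertex `c` of valence four whose link is a Euclidean 4-circuit, all four edges
containing `c` being labeled `2`. -/
def IsRAConeOn4Circuit (T : Set (Finset E3)) : Prop :=
  ∃ (c : E3) (v : Fin 4 → E3), IsEuclidean4Circuit L m v ∧
    linkVerts L c = {v 0, v 1, v 2, v 3} ∧
    (∀ i : Fin 4, ({c, v i, v (i + 1)} : Finset E3) ∈ L.faces) ∧
    (∀ i : Fin 4, m c (v i) = 2) ∧
    T = star L c

/-- The generating relation for Seifert subcomplexes: two infinite, maximal
RA-suspensions whose intersection is a Euclidean 4-circuit. -/
def SeifertRel (S S' : Set (Finset E3)) : Prop :=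
  IsInfMaxRASusp L m S ∧ IsInfMaxRASusp L m S' ∧
  ∃ v : Fin 4 → E3, IsEuclidean4Circuit L m v ∧ S ∩ S' = circuitComplex v

/-- `D` is a Seifert subcomplex of `L`: the union of the members of an
equivalence class of infinite, maximal RA-suspensions under the equivalence
relation generated by `SeifertRel`. -/
def IsSeifertSubcomplex (D : Set (Finset E3)) : Prop :=
  ∃ S₀, IsInfMaxRASusp L m S₀ ∧
    D = ⋃₀ {S | IsInfMaxRASusp L m S ∧ Relation.EqvGen (SeifertRel L m) S₀ S}

end CoxOrb

section PlaneTop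

open Complex in
/-- `l` is the total change of a continuous logarithm of `f` on `[0,1]`. -/
def IsLC (f : ℝ → ℂ) (l : ℂ) : Prop :=
  ∃ g : ℝ → ℂ, Continuous g ∧ (∀ t, Complex.exp (g t) = f t) ∧ l = g 1 - g 0

theorem IsLC.unique {f : ℝ → ℂ} {l l' : ℂ} (h : IsLC f l) (h' : IsLC f l') : l = l' := by
  obtain ⟨g, hg, hgf, rfl⟩ := h
  obtain ⟨g', hg', hgf', rfl⟩ := h'
  have hne : ∀ t, f t ≠ 0 := fun t => by rw [← hgf]; exact Complex.exp_ne_zero _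
  have hf : Continuous f := by
    have : f = fun t => Complex.exp (g t) := by ext t; rw [hgf]
    rw [this]; fun_prop
  have hex : ∃ n : ℤ, g 0 = g' 0 + n * (2 * Real.pi * Complex.I) := by
    apply Complex.exp_eq_exp_iff_exists_int.1
    rw [hgf, hgf']
  obtain ⟨n, hn⟩ := hex
  obtain ⟨F, -, hu⟩ := Complex.isCoveringMapOn_exp.existsUnique_continuousMap_lifts
    (A := ℝ) ⟨f, hf⟩ (a₀ := 0) (e₀ := g 0) (hgf 0) (fun t => hne t)
  have e1 := hu ⟨g, hg⟩ ⟨rfl, by ext t; exact hgf t⟩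
  have e2 := hu ⟨fun t => g' t + n * (2 * Real.pi * Complex.I), by fun_prop⟩
    ⟨hn.symm, by
      ext t
      show Complex.exp (g' t + n * (2 * Real.pi * Complex.I)) = f t
      rw [← hgf' t]
      exact Complex.exp_eq_exp_iff_exists_int.2 ⟨n, rfl⟩⟩
  have e3 : g 1 = g' 1 + n * (2 * Real.pi * Complex.I) := by
    have := congrArg (fun F : C(ℝ, ℂ) => F 1) (e1.trans e2.symm)
    simpa using this
  rw [e3, hn]; ring

theorem IsLC.neg {f : ℝ → ℂ} {l : ℂ} (h : IsLC f l) : IsLC (fun t => - f t) l := by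
  obtain ⟨g, hg, hgf, rfl⟩ := h
  refine ⟨fun t => g t + Real.pi * Complex.I, by fun_prop, fun t => ?_, by ring⟩
  rw [Complex.exp_add, hgf, Complex.exp_pi_mul_I]; ring

theorem IsLC.exp {f : ℝ → ℂ} {l : ℂ} (h : IsLC f l) : f 1 = f 0 * Complex.exp l := by
  obtain ⟨g, hg, hgf, rfl⟩ := h
  rw [← hgf, ← hgf, ← Complex.exp_add]; congr 1; ring

/-- The cell relation: the logarithm changes around a square add up to zero. -/
theorem cell_lc {γ δ : ℝ → ℂ} (hγ : Continuous γ) (hδ : Continuous δ)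
    (hd : ∀ s t, γ s ≠ δ t) :
    ∃ la lb lc ld : ℂ, IsLC (fun t => γ 0 - δ t) la ∧ IsLC (fun t => γ 1 - δ t) lb ∧
      IsLC (fun s => δ 0 - γ s) lc ∧ IsLC (fun s => δ 1 - γ s) ld ∧
      la + ld - lb - lc = 0 := by
  obtain ⟨F, ⟨-, hF⟩, -⟩ := Complex.isCoveringMapOn_exp.existsUnique_continuousMap_lifts
    (A := ℝ × ℝ) ⟨fun q => γ q.1 - δ q.2, by fun_prop⟩ (a₀ := (0, 0))
    (e₀ := Complex.log (γ 0 - δ 0)) (Complex.exp_log (sub_ne_zero.2 (hd 0 0)))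
    (fun q => sub_ne_zero.2 (hd q.1 q.2))
  have hF' : ∀ s t, Complex.exp (F (s, t)) = γ s - δ t := fun s t => congrFun hF (s, t)
  refine ⟨F (0, 1) - F (0, 0), F (1, 1) - F (1, 0), F (1, 0) - F (0, 0), F (1, 1) - F (0, 1),
    ⟨fun t => F (0, t), by fun_prop, fun t => hF' 0 t, rfl⟩,
    ⟨fun t => F (1, t), by fun_prop, fun t => hF' 1 t, rfl⟩, ?_, ?_, by ring⟩
  · have : IsLC (fun s => γ s - δ 0) (F (1, 0) - F (0, 0)) :=
      ⟨fun s => F (s, 0), by fun_prop, fun s => hF' s 0, rfl⟩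
    simpa using this.neg
  · have : IsLC (fun s => γ s - δ 1) (F (1, 1) - F (0, 1)) :=
      ⟨fun s => F (s, 1), by fun_prop, fun s => hF' s 1, rfl⟩
    simpa using this.neg

open Classical in
/-- The system of integer equations attached to a drawing in the plane of a graph in which
independent edges do not meet. -/
theorem cell_system {k : ℕ} (p : Fin k → ℂ) (hp : Function.Injective p)
    (E : Fin k → Fin k → Prop) (γ : Fin k → Fin k → ℝ → ℂ)
    (hγ : ∀ a b, E a b → Continuous (γ a b) ∧ γ a b 0 = p a ∧ γ a b 1 = p b)
    (hd : ∀ a b c d, E a b → E c d → a ≠ c → a ≠ d → b ≠ c → b ≠ d →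
      ∀ s t, γ a b s ≠ γ c d t) :
    ∃ n : Fin k → Fin k → Fin k → ℤ, ∀ a b c d, E a b → E c d → a ≠ c → a ≠ d → b ≠ c → b ≠ d →
      n a c d + n d a b - n b c d - n c a b =
        (if c < a then 1 else 0) - (if d < a then 1 else 0) + (if d < b then 1 else 0)
          - (if c < b then 1 else 0) := by
  let lg : Fin k → Fin k → ℂ := fun a b =>
    if b < a then Complex.log (p b - p a) + Real.pi * Complex.I else Complex.log (p a - p b)
  have hlg : ∀ a b, a ≠ b → Complex.exp (lg a b) = p a - p b := by
    intro a b hab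
    have h1 : p a - p b ≠ 0 := sub_ne_zero.2 fun h => hab (hp h)
    have h2 : p b - p a ≠ 0 := sub_ne_zero.2 fun h => hab (hp h.symm)
    simp only [lg]
    split_ifs
    · rw [Complex.exp_add, Complex.exp_log h2, Complex.exp_pi_mul_I]; ring
    · rw [Complex.exp_log h1]
  have hsym : ∀ a b, a ≠ b → lg a b - lg b a =
      (2 * (if b < a then 1 else 0 : ℤ) - 1 : ℂ) * (Real.pi * Complex.I) := by
    intro a b hab
    simp only [lg]
    rcases lt_or_gt_of_ne hab with h | h
    · simp [h, h.not_gt]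
    · simp [h, h.not_gt]; ring
  let ex : Fin k → Fin k → Fin k → Prop := fun v c d => ∃ N : ℤ,
    IsLC (fun t => p v - γ c d t) (lg v d - lg v c + N * (2 * Real.pi * Complex.I))
  let n : Fin k → Fin k → Fin k → ℤ := fun v c d => if h : ex v c d then h.choose else 0
  have key : ∀ v c d l, v ≠ c → v ≠ d → E c d → IsLC (fun t => p v - γ c d t) l →
      l = lg v d - lg v c + n v c d * (2 * Real.pi * Complex.I) := by
    intro v c d l hvc hvd hE h
    have h1 := h.exp
    simp only [(hγ c d hE).2.1, (hγ c d hE).2.2] at h1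
    rw [← hlg v d hvd, ← hlg v c hvc, ← Complex.exp_add] at h1
    obtain ⟨N, hN⟩ := Complex.exp_eq_exp_iff_exists_int.1 h1
    have hex : ex v c d := by
      refine ⟨-N, ?_⟩
      convert h using 1
      push_cast
      rw [hN]; ring
    have hn : n v c d = hex.choose := dif_pos hex
    rw [hn]
    exact h.unique hex.choose_spec
  refine ⟨n, fun a b c d hab hcd hac had hbc hbd => ?_⟩
  obtain ⟨la, lb, lc, ld, h1, h2, h3, h4, h5⟩ := cell_lc (hγ a b hab).1 (hγ c d hcd).1
    (hd a b c d hab hcd hac had hbc hbd)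
  simp only [(hγ a b hab).2.1, (hγ a b hab).2.2, (hγ c d hcd).2.1, (hγ c d hcd).2.2] at h1 h2 h3 h4
  rw [key _ _ _ _ hac had hcd h1, key _ _ _ _ hbc hbd hcd h2, key _ _ _ _ hac.symm hbc.symm hab h3,
    key _ _ _ _ had.symm hbd.symm hab h4] at h5
  have s1 := hsym a c hac
  have s2 := hsym a d had
  have s3 := hsym b c hbc
  have s4 := hsym b d hbd
  have hpi : (2 * Real.pi * Complex.I : ℂ) ≠ 0 := by
    simp [Real.pi_ne_zero, Complex.I_ne_zero]
  have : ((n a c d + n d a b - n b c d - n c a b : ℤ) : ℂ) =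
      (((if c < a then 1 else 0) - (if d < a then 1 else 0) + (if d < b then 1 else 0)
          - (if c < b then 1 else 0) : ℤ) : ℂ) := by
    apply mul_right_cancel₀ hpi
    push_cast at s1 s2 s3 s4 ⊢
    linear_combination h5 + s1 - s2 - s3 + s4
  exact_mod_cast this

theorem no_k33_system (n : Fin 6 → Fin 6 → Fin 6 → ℤ)
    (h : ∀ a b c d : Fin 6, (a < 3 ∧ 3 ≤ b) → (c < 3 ∧ 3 ≤ d) → a ≠ c → a ≠ d → b ≠ c → b ≠ d →
      n a c d + n d a b - n b c d - n c a b =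
        (if c < a then 1 else 0) - (if d < a then 1 else 0) + (if d < b then 1 else 0)
          - (if c < b then 1 else 0)) : False := by
  have e1 := h 0 3 1 4
  have e2 := h 0 3 1 5
  have e3 := h 0 4 1 3
  have e4 := h 0 4 1 5
  have e5 := h 0 5 1 3
  have e6 := h 0 5 1 4
  have f1 := h 0 3 2 4
  have f2 := h 0 3 2 5
  have f3 := h 0 4 2 3
  have f4 := h 0 4 2 5
  have f5 := h 0 5 2 3
  have f6 := h 0 5 2 4
  have g1 := h 1 3 2 4
  have g2 := h 1 3 2 5
  have g3 := h 1 4 2 3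
  have g4 := h 1 4 2 5
  have g5 := h 1 5 2 3
  have g6 := h 1 5 2 4
  clear h
  simp at e1 e2 e3 e4 e5 e6 f1 f2 f3 f4 f5 f6 g1 g2 g3 g4 g5 g6
  omega

theorem no_k5_system (n : Fin 5 → Fin 5 → Fin 5 → ℤ)
    (h : ∀ a b c d : Fin 5, a < b → c < d → a ≠ c → a ≠ d → b ≠ c → b ≠ d →
      n a c d + n d a b - n b c d - n c a b =
        (if c < a then 1 else 0) - (if d < a then 1 else 0) + (if d < b then 1 else 0)
          - (if c < b then 1 else 0)) : False := by
  have e1 := h 0 1 2 3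
  have e2 := h 0 1 2 4
  have e3 := h 0 1 3 4
  have e4 := h 0 2 1 3
  have e5 := h 0 2 1 4
  have e6 := h 0 2 3 4
  have f1 := h 0 3 1 2
  have f2 := h 0 3 1 4
  have f3 := h 0 3 2 4
  have f4 := h 0 4 1 2
  have f5 := h 0 4 1 3
  have f6 := h 0 4 2 3
  have g1 := h 1 2 3 4
  have g2 := h 1 3 2 4
  have g3 := h 1 4 2 3
  clear h
  simp at e1 e2 e3 e4 e5 e6 f1 f2 f3 f4 f5 f6 g1 g2 g3
  omega

end PlaneTop
namespace CoxOrb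

section SpaceTop

/-- The part of the 1-skeleton spanned by the vertices in `A`. -/
def rl (L : SimplicialComplex ℝ E3) (A : Set E3) : Set E3 :=
  {p | ∃ F ∈ L.faces, F.card ≤ 2 ∧ (F : Set E3) ⊆ A ∧ p ∈ convexHull ℝ (F : Set E3)}

theorem rl_disjoint (L : SimplicialComplex ℝ E3) {A B : Set E3} (h : Disjoint A B) {p q : E3}
    (hp : p ∈ rl L A) (hq : q ∈ rl L B) : p ≠ q := by
  rintro rfl
  obtain ⟨F, hF, -, hFA, hpF⟩ := hp
  obtain ⟨G, hG, -, hGB, hpG⟩ := hq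
  have h1 := L.inter_subset_convexHull hF hG ⟨hpF, hpG⟩
  have h2 : (F : Set E3) ∩ G = ∅ := (h.mono hFA hGB).inter_eq
  rw [h2] at h1
  simp at h1

theorem rl_subset (L : SimplicialComplex ℝ E3) (A : Set E3) : rl L A ⊆ rl L Set.univ := by
  rintro p ⟨F, hF, h2, -, hp⟩
  exact ⟨F, hF, h2, Set.subset_univ _, hp⟩

theorem rl_space (L : SimplicialComplex ℝ E3) (A : Set E3) : rl L A ⊆ L.space := by
  rintro p ⟨F, hF, h2, -, hp⟩
  exact L.convexHull_subset_space hF hp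

instance : Fact (Module.finrank ℝ E3 = 2 + 1) := ⟨by simp⟩

theorem sphere_compl_preconnected (p q : Metric.sphere (0 : E3) 1) :
    IsPreconnected ({p, q}ᶜ : Set (Metric.sphere (0 : E3) 1)) := by
  by_cases hpq : q = p
  · subst hpq
    have : ({q, q}ᶜ : Set (Metric.sphere (0 : E3) 1)) = (stereographic' 2 q).symm '' Set.univ := by
      have := (stereographic' 2 q).symm_image_target_eq_source
      rw [stereographic'_target, stereographic'_source] at this
      rw [this]; simp
    rw [this]
    apply isPreconnected_univ.image
    have := (stereographic' 2 q).continuousOn_symm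
    rwa [stereographic'_target] at this
  · have hq : q ∈ (stereographic' 2 p).source := by
      rw [stereographic'_source]; exact hpq
    have : ({p, q}ᶜ : Set (Metric.sphere (0 : E3) 1)) =
        (stereographic' 2 p).symm '' {stereographic' 2 p q}ᶜ := by
      ext z
      constructor
      · intro hz
        have hz1 : z ∈ (stereographic' 2 p).source := by
          rw [stereographic'_source]; intro h; exact hz (Or.inl h)
        refine ⟨stereographic' 2 p z, ?_, (stereographic' 2 p).left_inv hz1⟩
        intro h
        exact hz (Or.inr ((stereographic' 2 p).injOn hz1 hq h))
      · rintro ⟨w, hw, rfl⟩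
        have hw1 : w ∈ (stereographic' 2 p).target := by rw [stereographic'_target]; trivial
        rintro (h | h)
        · have := (stereographic' 2 p).map_target hw1
          rw [stereographic'_source] at this
          exact this h
        · apply hw
          have h' : (stereographic' 2 p).symm w = q := h
          rw [← h', (stereographic' 2 p).right_inv hw1]; rfl
    rw [this]
    refine IsPreconnected.image ?_ _ ?_
    · apply (isConnected_compl_singleton_of_one_lt_rank _ _).isPreconnected
      rw [← Module.finrank_eq_rank]; simp
    · have := (stereographic' 2 p).continuousOn_symm
      rw [stereographic'_target] at this
      exact this.mono (Set.subset_univ _)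

theorem exists_missing (L : SimplicialComplex ℝ E3) (m : E3 → E3 → ℕ) (hL : IsLabeledS2 L m)
    {a b : E3} (hab : a ≠ b) (he : ({a, b} : Finset E3) ∈ L.faces) :
    ∃ p ∈ L.space, p ∉ rl L Set.univ := by
  by_contra! hall
  obtain ⟨h⟩ := hL.sphere
  let f : ℝ → E3 := fun t => AffineMap.lineMap a b t
  have hfc : Continuous f := by
    simp only [f]; exact AffineMap.lineMap_continuous
  have hfi : Function.Injective f := AffineMap.lineMap_injective ℝ hab
  have hseg : convexHull ℝ (({a, b} : Finset E3) : Set E3) = f '' Set.Icc 0 1 := by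
    rw [Finset.coe_pair, convexHull_pair, segment_eq_image_lineMap]
  have f0 : f 0 = a := by simp [f]
  have f1 : f 1 = b := by simp [f]
  let K : Set E3 := ⋃ G ∈ {G | G ∈ L.faces ∧ G.card ≤ 2 ∧ G ≠ {a, b}}, convexHull ℝ (G : Set E3)
  have hK : IsClosed K := by
    refine Set.Finite.isClosed_biUnion (hL.finite.subset fun G hG => hG.1) fun G _ => ?_
    exact (G.finite_toSet.isCompact_convexHull ℝ).isClosed
  have hKf : ∀ t ∈ Set.Icc (0 : ℝ) 1, f t ∈ K → t = 0 ∨ t = 1 := by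
    intro t ht hft
    simp only [K, Set.mem_iUnion] at hft
    obtain ⟨G, ⟨hG, hG2, hGn⟩, hfG⟩ := hft
    have h1 : f t ∈ convexHull ℝ (({a, b} : Finset E3) : Set E3) := by
      rw [hseg]; exact ⟨t, ht, rfl⟩
    have h2 := L.inter_subset_convexHull he hG ⟨h1, hfG⟩
    have h3 : ¬ (a ∈ G ∧ b ∈ G) := by
      rintro ⟨ha, hb⟩
      apply hGn
      symm
      apply Finset.eq_of_subset_of_card_le
      · intro z hz; simp at hz; rcases hz with rfl | rfl <;> assumption
      · rw [Finset.card_pair hab]; exact hG2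
    by_cases ha : a ∈ G
    · have hb : b ∉ G := fun hb => h3 ⟨ha, hb⟩
      have : ((({a, b} : Finset E3) : Set E3) ∩ G) ⊆ {a} := by
        rintro z ⟨hz, hz'⟩
        simp at hz
        rcases hz with rfl | rfl
        · rfl
        · exact absurd hz' hb
      have := convexHull_mono (𝕜 := ℝ) this h2
      simp at this
      left; apply hfi; rw [this, f0]
    · have : ((({a, b} : Finset E3) : Set E3) ∩ G) ⊆ {b} := by
        rintro z ⟨hz, hz'⟩
        simp at hz
        rcases hz with rfl | rfl
        · exact absurd hz' ha
        · rfl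
      have := convexHull_mono (𝕜 := ℝ) this h2
      simp at this
      right; apply hfi; rw [this, f1]
  have hIcc : ∀ t ∈ Set.Icc (0 : ℝ) 1, f t ∈ L.space := by
    intro t ht
    apply L.convexHull_subset_space he
    rw [hseg]; exact ⟨t, ht, rfl⟩
  have hx : f (1/3) ∈ L.space := hIcc _ (by norm_num)
  have hy : f (2/3) ∈ L.space := hIcc _ (by norm_num)
  have hpre : IsPreconnected (L.space \ {f (1/3), f (2/3)}) := by
    have h1 := (sphere_compl_preconnected (h ⟨_, hx⟩) (h ⟨_, hy⟩)).image
      (fun z => (h.symm z : E3)) (by fun_prop)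
    convert h1 using 1
    ext z
    constructor
    · rintro ⟨hz, hz'⟩
      refine ⟨h ⟨z, hz⟩, ?_, by simp⟩
      rintro (h' | h')
      · have := h.injective h'
        exact hz' (Or.inl (congrArg Subtype.val this))
      · have := h.injective h'
        exact hz' (Or.inr (congrArg Subtype.val this))
    · rintro ⟨w, hw, rfl⟩
      refine ⟨(h.symm w).2, ?_⟩
      rintro (h' | h')
      · apply hw; left
        have : h.symm w = ⟨_, hx⟩ := Subtype.ext h'
        rw [← this]; simp
      · apply hw; right
        have : h.symm w = ⟨_, hy⟩ := Subtype.ext h'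
        show w = _
        rw [← this]; simp
  have hA : IsClosed (f '' Set.Icc (1/3) (2/3)) := (isCompact_Icc.image hfc).isClosed
  have hB : IsClosed (K ∪ (f '' Set.Icc 0 (1/3) ∪ f '' Set.Icc (2/3) 1)) :=
    hK.union ((isCompact_Icc.image hfc).isClosed.union (isCompact_Icc.image hfc).isClosed)
  have := isPreconnected_closed_iff.1 hpre _ _ hA hB ?_ ?_ ?_
  · obtain ⟨z, ⟨-, hz⟩, ⟨t, ht, rfl⟩, h2⟩ := this
    have ht1 : t ≠ 1/3 := by rintro rfl; exact hz (Or.inl rfl)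
    have ht2 : t ≠ 2/3 := by rintro rfl; exact hz (Or.inr rfl)
    rcases h2 with h2 | ⟨s, hs, h2⟩ | ⟨s, hs, h2⟩
    · rcases hKf t ⟨by linarith [ht.1], by linarith [ht.2]⟩ h2 with h3 | h3
      · have := ht.1; rw [h3] at this; norm_num at this
      · have := ht.2; rw [h3] at this; norm_num at this
    · have := hfi h2; subst this
      exact ht1 (le_antisymm hs.2 ht.1)
    · have := hfi h2; subst this
      exact ht2 (le_antisymm ht.2 hs.1)
  · rintro z ⟨hz, -⟩
    obtain ⟨G, hG, hG2, -, hzG⟩ := hall z hz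
    by_cases hGe : G = {a, b}
    · rw [hGe, hseg] at hzG
      obtain ⟨t, ht, rfl⟩ := hzG
      rcases le_total t (1/3) with h1 | h1
      · right; right; left; exact ⟨t, ⟨ht.1, h1⟩, rfl⟩
      rcases le_total t (2/3) with h2 | h2
      · left; exact ⟨t, ⟨h1, h2⟩, rfl⟩
      · right; right; right; exact ⟨t, ⟨h2, ht.2⟩, rfl⟩
    · right; left
      simp only [K, Set.mem_iUnion]
      exact ⟨G, ⟨hG, hG2, hGe⟩, hzG⟩
  · refine ⟨f (1/2), ⟨hIcc _ (by norm_num), ?_⟩, ⟨1/2, by norm_num, rfl⟩⟩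
    rintro (h' | h') <;> (have := hfi h'; norm_num at this)
  · refine ⟨f 0, ⟨hIcc _ (by norm_num), ?_⟩, Or.inr (Or.inl ⟨0, by norm_num, rfl⟩)⟩
    rintro (h' | h') <;> (have := hfi h'; norm_num at this)

theorem exists_planar (L : SimplicialComplex ℝ E3) (m : E3 → E3 → ℕ) (hL : IsLabeledS2 L m)
    {a b : E3} (hab : a ≠ b) (he : ({a, b} : Finset E3) ∈ L.faces) :
    ∃ φ : E3 → ℂ, ContinuousOn φ (rl L Set.univ) ∧ Set.InjOn φ (rl L Set.univ) := by
  classical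
  obtain ⟨p, hp, hpn⟩ := exists_missing L m hL hab he
  obtain ⟨h⟩ := hL.sphere
  let e := Complex.orthonormalBasisOneI.repr.symm
  let st := stereographic' 2 (h ⟨p, hp⟩)
  let ψ : L.space → ℂ := fun z => e (st (h z))
  have hsrc : ∀ z : L.space, (z : E3) ∈ rl L Set.univ → h z ∈ st.source := by
    intro z hz
    simp only [st, stereographic'_source]
    intro h'
    have := h.injective h'
    apply hpn
    rw [this] at hz
    exact hz
  refine ⟨fun z => if hz : z ∈ L.space then ψ ⟨z, hz⟩ else 0, ?_, ?_⟩
  · rw [continuousOn_iff_continuous_domRestrict]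
    have h1 : Continuous fun z : rl L Set.univ => h ⟨z, rl_space L _ z.2⟩ := by fun_prop
    have h2 : Continuous fun z : rl L Set.univ => st (h ⟨z, rl_space L _ z.2⟩) :=
      st.continuousOn.comp_continuous h1 fun z => hsrc _ z.2
    have h3 := e.continuous.comp h2
    convert h3 using 1
    ext z
    have := rl_space L _ z.2
    simp [this, ψ]
  · intro z hz w hw hzw
    have hz' := rl_space L _ hz
    have hw' := rl_space L _ hw
    simp only [hz', hw', dif_pos, ψ] at hzw
    have h1 := st.injOn (hsrc ⟨z, hz'⟩ hz) (hsrc ⟨w, hw'⟩ hw) (e.injective hzw)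
    exact congrArg Subtype.val (h.injective h1)

end SpaceTop

end CoxOrb
namespace CoxOrb

section Drawing

/-- Adjacency in the 1-skeleton. -/
def Ad (L : SimplicialComplex ℝ E3) (p q : E3) : Prop :=
  p ≠ q ∧ ({p, q} : Finset E3) ∈ L.faces

theorem Ad.symm {L : SimplicialComplex ℝ E3} {p q : E3} (h : Ad L p q) : Ad L q p :=
  ⟨h.1.symm, by rw [Finset.pair_comm]; exact h.2⟩

/-- Connectedness in the 1-skeleton inside the vertex set `A`. -/
def Rch (L : SimplicialComplex ℝ E3) (A : Set E3) : E3 → E3 → Prop :=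
  Relation.ReflTransGen fun p q => Ad L p q ∧ p ∈ A ∧ q ∈ A

theorem rl_left {L : SimplicialComplex ℝ E3} {p q : E3} (h : Ad L p q) {A : Set E3} (hp : p ∈ A) :
    p ∈ rl L A := by
  refine ⟨{p}, L.down_closed h.2 (by simp) (by simp), by simp, by simpa using hp, by simp⟩

theorem joined_of_ad {L : SimplicialComplex ℝ E3} {p q : E3} (h : Ad L p q) {A : Set E3}
    (hp : p ∈ A) (hq : q ∈ A) : JoinedIn (rl L A) p q := by
  have hc : Convex ℝ (convexHull ℝ (({p, q} : Finset E3) : Set E3)) := convex_convexHull _ _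
  have hpc : IsPathConnected (convexHull ℝ (({p, q} : Finset E3) : Set E3)) :=
    hc.isPathConnected ⟨p, subset_convexHull _ _ (by simp)⟩
  refine (hpc.joinedIn p (subset_convexHull _ _ (by simp)) q
    (subset_convexHull _ _ (by simp))).mono ?_
  intro z hz
  refine ⟨{p, q}, h.2, Finset.card_le_two, ?_, hz⟩
  intro w hw
  simp at hw
  rcases hw with rfl | rfl <;> assumption

theorem joined_of_rch {L : SimplicialComplex ℝ E3} {A : Set E3} {p q : E3} (h : Rch L A p q)
    (hp : p ∈ rl L A) : JoinedIn (rl L A) p q := by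
  induction h with
  | refl => exact JoinedIn.refl hp
  | tail _ h2 ih => exact ih.trans (joined_of_ad h2.1 h2.2.1 h2.2.2)

theorem drawing_system (L : SimplicialComplex ℝ E3) (m : E3 → E3 → ℕ) (hL : IsLabeledS2 L m)
    {x y : E3} (hxy : Ad L x y) {k : ℕ} (u : Fin k → E3) (hu : Function.Injective u)
    (hur : ∀ a, u a ∈ rl L Set.univ)
    (E : Fin k → Fin k → Prop) (A : Fin k → Fin k → Set E3)
    (hj : ∀ a b, E a b → JoinedIn (rl L (A a b)) (u a) (u b))
    (hd : ∀ a b c d, E a b → E c d → a ≠ c → a ≠ d → b ≠ c → b ≠ d →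
      Disjoint (A a b) (A c d)) :
    ∃ n : Fin k → Fin k → Fin k → ℤ, ∀ a b c d, E a b → E c d → a ≠ c → a ≠ d → b ≠ c → b ≠ d →
      n a c d + n d a b - n b c d - n c a b =
        (if c < a then 1 else 0) - (if d < a then 1 else 0) + (if d < b then 1 else 0)
          - (if c < b then 1 else 0) := by
  classical
  obtain ⟨φ, hφ, hφi⟩ := exists_planar L m hL hxy.1 hxy.2
  let γ : Fin k → Fin k → ℝ → ℂ := fun a b =>
    if h : E a b then fun t => φ ((hj a b h).somePath.extend t) else 0
  have hγ : ∀ a b (h : E a b), γ a b = fun t => φ ((hj a b h).somePath.extend t) :=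
    fun a b h => dif_pos h
  have hmem : ∀ a b (h : E a b) t, (hj a b h).somePath.extend t ∈ rl L (A a b) :=
    fun a b h t => (hj a b h).somePath_mem _
  refine cell_system (fun a => φ (u a)) (fun a b hab => hu (hφi (hur a) (hur b) hab)) E γ ?_ ?_
  · intro a b h
    rw [hγ a b h]
    refine ⟨?_, by simp, by simp⟩
    exact hφ.comp_continuous (by fun_prop) fun t => rl_subset L _ (hmem a b h t)
  · intro a b c d hab hcd h1 h2 h3 h4 s t
    rw [hγ a b hab, hγ c d hcd]
    intro h
    have := hφi (rl_subset L _ (hmem a b hab s)) (rl_subset L _ (hmem c d hcd t)) h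
    exact rl_disjoint L (hd a b c d hab hcd h1 h2 h3 h4) (hmem a b hab s) (hmem c d hcd t) this

/-- The 1-skeleton contains no subdivision of `K_{3,3}` (one subdivided edge). -/
theorem no_k33 (L : SimplicialComplex ℝ E3) (m : E3 → E3 → ℕ) (hL : IsLabeledS2 L m)
    {a0 a1 a2 b0 b1 b2 : E3} (ha : a0 ≠ a1) (hb : b0 ≠ b1) (hab : a2 ≠ b2)
    (h00 : Ad L a0 b0) (h01 : Ad L a0 b1) (h02 : Ad L a0 b2)
    (h10 : Ad L a1 b0) (h11 : Ad L a1 b1) (h12 : Ad L a1 b2)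
    (h20 : Ad L a2 b0) (h21 : Ad L a2 b1) {B : Set E3} (h22 : Rch L B a2 b2)
    (ha2 : a2 ∈ B) (hb2 : b2 ∈ B) (h0 : a0 ∉ B) (h1 : a1 ∉ B) (h0' : b0 ∉ B) (h1' : b1 ∉ B) :
    False := by
  classical
  have n1 : a0 ≠ a2 := by rintro rfl; exact h0 ha2
  have n2 : a1 ≠ a2 := by rintro rfl; exact h1 ha2
  have n3 : b0 ≠ b2 := by rintro rfl; exact h0' hb2
  have n4 : b1 ≠ b2 := by rintro rfl; exact h1' hb2
  have e00 := h00.1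
  have e01 := h01.1
  have e02 := h02.1
  have e10 := h10.1
  have e11 := h11.1
  have e12 := h12.1
  have e20 := h20.1
  have e21 := h21.1
  let u : Fin 6 → E3 := ![a0, a1, a2, b0, b1, b2]
  let A : Fin 6 → Fin 6 → Set E3 := fun a b => if a = 2 ∧ b = 5 then B else {u a, u b}
  obtain ⟨n, hn⟩ := drawing_system L m hL h00 u (by
      intro i j hij
      fin_cases i <;> fin_cases j <;> simp [u] at hij ⊢ <;> grind) (by
      intro i
      fin_cases i
      · exact rl_left h00 trivial
      · exact rl_left h10 trivial
      · exact rl_left h20 trivial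
      · exact rl_left h00.symm trivial
      · exact rl_left h01.symm trivial
      · exact rl_left h02.symm trivial) (fun a b => a < 3 ∧ 3 ≤ b) A (by
      rintro i j ⟨hi, hj⟩
      fin_cases i <;> fin_cases j <;> simp at hi hj
      · exact joined_of_ad h00 (by simp [A, u]) (by simp [A, u])
      · exact joined_of_ad h01 (by simp [A, u]) (by simp [A, u])
      · exact joined_of_ad h02 (by simp [A, u]) (by simp [A, u])
      · exact joined_of_ad h10 (by simp [A, u]) (by simp [A, u])
      · exact joined_of_ad h11 (by simp [A, u]) (by simp [A, u])
      · exact joined_of_ad h12 (by simp [A, u]) (by simp [A, u])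
      · exact joined_of_ad h20 (by simp [A, u]) (by simp [A, u])
      · exact joined_of_ad h21 (by simp [A, u]) (by simp [A, u])
      · exact joined_of_rch h22 (rl_left h20 ha2)) (by
      rintro i j k l ⟨hi, hj⟩ ⟨hk, hl⟩ q1 q2 q3 q4
      rw [Set.disjoint_left]
      intro z hz hz'
      fin_cases i <;> simp at hi <;> fin_cases j <;> simp at hj <;>
      fin_cases k <;> simp at hk q1 <;> fin_cases l <;> simp at hl q4 <;>
      simp [A, u] at hz hz' <;> grind)
  exact no_k33_system n hn

/-- The 1-skeleton contains no subdivision of `K_5` (two independent subdivided edges). -/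
theorem no_k5 (L : SimplicialComplex ℝ E3) (m : E3 → E3 → ℕ) (hL : IsLabeledS2 L m)
    {w c0 c1 c2 c3 x y : E3} (n02 : c0 ≠ c2) (n13 : c1 ≠ c3)
    (w0 : Ad L w c0) (w1 : Ad L w c1) (w2 : Ad L w c2) (w3 : Ad L w c3)
    (h01 : Ad L c0 c1) (h12 : Ad L c1 c2) (h23 : Ad L c2 c3) (h30 : Ad L c3 c0)
    (x0 : Ad L c0 x) (x2 : Ad L x c2) (y1 : Ad L c1 y) (y3 : Ad L y c3)
    (hxw : x ≠ w) (hyw : y ≠ w) (hxy : x ≠ y) (hx1 : x ≠ c1) (hx3 : x ≠ c3)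
    (hy0 : y ≠ c0) (hy2 : y ≠ c2) : False := by
  classical
  have e0 := w0.1
  have e1 := w1.1
  have e2 := w2.1
  have e3 := w3.1
  have e4 := h01.1
  have e5 := h12.1
  have e6 := h23.1
  have e7 := h30.1
  have e8 := x0.1
  have e9 := x2.1
  have e10 := y1.1
  have e11 := y3.1
  let u : Fin 5 → E3 := ![w, c0, c1, c2, c3]
  let A : Fin 5 → Fin 5 → Set E3 := fun a b =>
    if a = 1 ∧ b = 3 then {c0, x, c2} else if a = 2 ∧ b = 4 then {c1, y, c3} else {u a, u b}
  obtain ⟨n, hn⟩ := drawing_system L m hL w0 u (by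
      intro i j hij
      fin_cases i <;> fin_cases j <;> simp [u] at hij ⊢ <;> grind) (by
      intro i
      fin_cases i
      · exact rl_left w0 trivial
      · exact rl_left w0.symm trivial
      · exact rl_left w1.symm trivial
      · exact rl_left w2.symm trivial
      · exact rl_left w3.symm trivial) (fun a b => a < b) A (by
      rintro i j hij
      fin_cases i <;> fin_cases j <;> simp at hij
      · exact joined_of_ad w0 (by simp [A, u]) (by simp [A, u])
      · exact joined_of_ad w1 (by simp [A, u]) (by simp [A, u])
      · exact joined_of_ad w2 (by simp [A, u]) (by simp [A, u])
      · exact joined_of_ad w3 (by simp [A, u]) (by simp [A, u])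
      · exact joined_of_ad h01 (by simp [A, u]) (by simp [A, u])
      · exact (joined_of_ad x0 (by simp [A]) (by simp [A])).trans
          (joined_of_ad x2 (by simp [A]) (by simp [A]))
      · exact joined_of_ad h30.symm (by simp [A, u]) (by simp [A, u])
      · exact joined_of_ad h12 (by simp [A, u]) (by simp [A, u])
      · exact (joined_of_ad y1 (by simp [A]) (by simp [A])).trans
          (joined_of_ad y3 (by simp [A]) (by simp [A]))
      · exact joined_of_ad h23 (by simp [A, u]) (by simp [A, u])) (by
      rintro i j k l hij hkl q1 q2 q3 q4
      rw [Set.disjoint_left]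
      intro z hz hz'
      fin_cases i <;> fin_cases j <;> simp at hij <;>
      fin_cases k <;> simp at q1 q3 <;> fin_cases l <;> simp at hkl q2 q4 <;>
      simp [A, u] at hz hz' <;> grind)
  exact no_k5_system n hn

end Drawing

end CoxOrb
namespace CoxOrb

section Comb

variable {L : SimplicialComplex ℝ E3} {m : E3 → E3 → ℕ}

/-- Adjacency with label `2`. -/
def Ad2 (L : SimplicialComplex ℝ E3) (m : E3 → E3 → ℕ) (p q : E3) : Prop :=
  Ad L p q ∧ m p q = 2

theorem Ad2.symm (hL : IsLabeledS2 L m) {p q : E3} (h : Ad2 L m p q) : Ad2 L m q p :=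
  ⟨h.1.symm, by rw [hL.symm]; exact h.2⟩

/-- Common neighbours with labels `2`. -/
def WW (L : SimplicialComplex ℝ E3) (m : E3 → E3 → ℕ) (t t' : E3) : Set E3 :=
  {w | Ad2 L m t w ∧ Ad2 L m t' w}

def Zc (L : SimplicialComplex ℝ E3) (m : E3 → E3 → ℕ) (t t' : E3) : Set (Finset E3) :=
  {F | F ∈ L.faces ∧ t ∉ F ∧ t' ∉ F ∧ insert t F ∈ L.faces ∧ insert t' F ∈ L.faces ∧
    ∀ v ∈ F, m t v = 2 ∧ m t' v = 2}

def can (L : SimplicialComplex ℝ E3) (m : E3 → E3 → ℕ) (t t' : E3) : Set (Finset E3) :=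
  joinSusp (Zc L m t t') t t'

def VV (T : Set (Finset E3)) : Set E3 := {v | ({v} : Finset E3) ∈ T}

/-- A Euclidean circuit with its fullness. -/
def Circ (L : SimplicialComplex ℝ E3) (m : E3 → E3 → ℕ) (a b c d : E3) : Prop :=
  Ad2 L m a b ∧ Ad2 L m b c ∧ Ad2 L m c d ∧ Ad2 L m d a ∧ a ≠ c ∧ b ≠ d ∧
    ¬ Ad L a c ∧ ¬ Ad L b d

theorem Circ.rot {a b c d : E3} (h : Circ L m a b c d) : Circ L m b c d a :=
  ⟨h.2.1, h.2.2.1, h.2.2.2.1, h.1, h.2.2.2.2.2.1, h.2.2.2.2.1.symm, h.2.2.2.2.2.2.2,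
    fun h' => h.2.2.2.2.2.2.1 h'.symm⟩

theorem Zc_comm (t t' : E3) : Zc L m t t' = Zc L m t' t := by
  ext F; simp only [Zc, Set.mem_ofPred_eq]; grind

theorem can_comm (t t' : E3) : can L m t t' = can L m t' t := by
  ext F; simp only [can, joinSusp, Zc_comm t t', Set.pair_comm ({t} : Finset E3)]
  simp only [Set.mem_union]
  tauto

theorem WW_comm (t t' : E3) : WW L m t t' = WW L m t' t := by
  ext F; simp only [WW, Set.mem_ofPred_eq]; tauto

theorem infmax_can {T : Set (Finset E3)} (h : IsInfMaxRASusp L m T) :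
    ∃ t t', t ≠ t' ∧ T = can L m t t' := by
  obtain ⟨⟨Z, t, t', hd, -, -⟩, hmax⟩ := h
  refine ⟨t, t', hd.tne, ?_⟩
  have hZ : Z ⊆ Zc L m t t' := by
    intro F hF
    refine ⟨hd.zsubset hF, hd.t_notin F hF, hd.t'_notin F hF, hd.subset ?_, hd.subset ?_, ?_⟩
    · rw [hd.eq]; exact Or.inl (Or.inr ⟨F, hF, rfl⟩)
    · rw [hd.eq]; exact Or.inr ⟨F, hF, rfl⟩
    · intro v hv
      exact hd.labels v (hd.zdown F hF {v} (by simpa using hv) (by simp))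
  have ht : ({t} : Finset E3) ∈ L.faces := by
    apply hd.subset; rw [hd.eq]; left; left; right; left; rfl
  have ht' : ({t'} : Finset E3) ∈ L.faces := by
    apply hd.subset; rw [hd.eq]; left; left; right; right; rfl
  apply hmax
  · refine ⟨Zc L m t t', t, t', ?_, fun F hF => hF.1, ?_, hd.znonempty.mono hZ, hd.tne,
      fun F hF => hF.2.1, fun F hF => hF.2.2.1, ?_, rfl⟩
    · rintro F (((h | rfl | rfl) | ⟨G, hG, rfl⟩) | ⟨G, hG, rfl⟩)
      · exact h.1
      · exact ht
      · exact ht'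
      · exact hG.2.2.2.1
      · exact hG.2.2.2.2.1
    · rintro F ⟨h1, h2, h3, h4, h5, h6⟩ G hGF hG
      exact ⟨L.down_closed h1 hGF hG, fun h => h2 (hGF h), fun h => h3 (hGF h),
        L.down_closed h4 (Finset.insert_subset_insert _ hGF) (by simp),
        L.down_closed h5 (Finset.insert_subset_insert _ hGF) (by simp),
        fun v hv => h6 v (hGF hv)⟩
    · intro v hv
      exact hv.2.2.2.2.2 v (by simp)
  · rw [hd.eq]
    rintro F (((h | h) | ⟨G, hG, rfl⟩) | ⟨G, hG, rfl⟩)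
    · exact Or.inl (Or.inl (Or.inl (hZ h)))
    · exact Or.inl (Or.inl (Or.inr h))
    · exact Or.inl (Or.inr ⟨G, hZ hG, rfl⟩)
    · exact Or.inr ⟨G, hZ hG, rfl⟩

theorem infmax_eq {T T' : Set (Finset E3)} (h : IsInfMaxRASusp L m T)
    (h' : IsInfMaxRASusp L m T') (hs : T ⊆ T') : T = T' := by
  obtain ⟨⟨Z, t, t', hd, -, -⟩, -⟩ := h'
  exact h.2 T' ⟨Z, t, t', hd⟩ hs

theorem infmax_faces {T : Set (Finset E3)} (h : IsInfMaxRASusp L m T) : T ⊆ L.faces := by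
  obtain ⟨⟨Z, t, t', hd, -, -⟩, -⟩ := h
  exact hd.subset

theorem mem_Zc_singleton {t t' v : E3} : ({v} : Finset E3) ∈ Zc L m t t' ↔ v ∈ WW L m t t' := by
  simp only [Zc, WW, Ad2, Ad, Set.mem_ofPred_eq, Finset.mem_singleton]
  constructor
  · rintro ⟨h1, h2, h3, h4, h5, h6⟩
    exact ⟨⟨⟨h2, h4⟩, (h6 v rfl).1⟩, ⟨⟨h3, h5⟩, (h6 v rfl).2⟩⟩
  · rintro ⟨⟨⟨h2, h4⟩, h6⟩, ⟨⟨h3, h5⟩, h7⟩⟩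
    exact ⟨L.down_closed h4 (by simp) (by simp), h2, h3, h4, h5, by rintro _ rfl; exact ⟨h6, h7⟩⟩

theorem Zc_mem {t t' v : E3} {F : Finset E3} (hF : F ∈ Zc L m t t') (hv : v ∈ F) :
    v ∈ WW L m t t' := by
  obtain ⟨h1, h2, h3, h4, h5, h6⟩ := hF
  refine ⟨⟨⟨by rintro rfl; exact h2 hv, L.down_closed h4 ?_ (by simp)⟩, (h6 v hv).1⟩,
    ⟨⟨by rintro rfl; exact h3 hv, L.down_closed h5 ?_ (by simp)⟩, (h6 v hv).2⟩⟩
  · intro z hz; simp at hz; rcases hz with rfl | rfl <;> simp [hv]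
  · intro z hz; simp at hz; rcases hz with rfl | rfl <;> simp [hv]

theorem can_mem {t t' v : E3} {F : Finset E3} (hF : F ∈ can L m t t') (hv : v ∈ F) :
    v = t ∨ v = t' ∨ v ∈ WW L m t t' := by
  rcases hF with ((h | rfl | rfl) | ⟨G, hG, rfl⟩) | ⟨G, hG, rfl⟩
  · exact Or.inr (Or.inr (Zc_mem h hv))
  · left; simpa using hv
  · right; left; simpa using hv
  · simp at hv; rcases hv with h | h
    · exact Or.inl h
    · exact Or.inr (Or.inr (Zc_mem hG h))
  · simp at hv; rcases hv with h | h
    · exact Or.inr (Or.inl h)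
    · exact Or.inr (Or.inr (Zc_mem hG h))

theorem mem_VV_can {t t' v : E3} :
    v ∈ VV (can L m t t') ↔ v = t ∨ v = t' ∨ v ∈ WW L m t t' := by
  constructor
  · intro h; exact can_mem h (by simp)
  · rintro (rfl | rfl | h)
    · left; left; right; left; rfl
    · left; left; right; right; rfl
    · left; left; left; exact mem_Zc_singleton.2 h

theorem can_VV {t t' v : E3} {F : Finset E3} (hF : F ∈ can L m t t') (hv : v ∈ F) :
    v ∈ VV (can L m t t') := mem_VV_can.2 (can_mem hF hv)

theorem flag_tri (hL : IsLabeledS2 L m) (hf : MetricFlag L m) {t p q : E3}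
    (h1 : Ad2 L m t p) (h2 : Ad2 L m t q) (h3 : Ad L p q) :
    ({t, p, q} : Finset E3) ∈ L.faces := by
  rw [hf t p q h1.1.1 h3.1 h2.1.1 h1.1.2 h3.2 h2.1.2, h1.2, hL.symm q t, h2.2]
  have h4 := hL.two_le p q h3.1 h3.2
  have : (0 : ℝ) < 1 / (m p q : ℝ) := by
    apply one_div_pos.2
    exact_mod_cast (by omega : 0 < m p q)
  push_cast
  linarith

theorem mem_can (hL : IsLabeledS2 L m) (hf : MetricFlag L m) {t t' p q : E3} {F : Finset E3}
    (hF : F ∈ L.faces) (htt : t ≠ t') (hn : ¬ Ad L t t')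
    (hp : p ∈ WW L m t t') (hq : q ∈ WW L m t t')
    (hv : ∀ v ∈ F, v = t ∨ v = t' ∨ v = p ∨ v = q) : F ∈ can L m t t' := by
  classical
  have hboth : ¬ (t ∈ F ∧ t' ∈ F) := by
    rintro ⟨h1, h2⟩
    refine hn ⟨htt, L.down_closed hF ?_ (by simp)⟩
    intro z hz; simp at hz; rcases hz with rfl | rfl <;> assumption
  have hsing : ∀ r ∈ WW L m t t', ∀ G : Finset E3, G = {r} → G ∈ Zc L m t t' := by
    rintro r hr G rfl; exact mem_Zc_singleton.2 hr
  set G := F.filter (fun v => v ≠ t ∧ v ≠ t') with hG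
  have hGpq : ∀ v ∈ G, v = p ∨ v = q := by
    intro v h
    simp only [hG, Finset.mem_filter] at h
    rcases hv v h.1 with h1 | h1 | h1 | h1
    · exact absurd h1 h.2.1
    · exact absurd h1 h.2.2
    · exact Or.inl h1
    · exact Or.inr h1
  have hGz : G.Nonempty → G ∈ Zc L m t t' := by
    intro hne
    by_cases h1 : p ∈ G
    · by_cases h2 : q ∈ G
      · by_cases hpq : p = q
        · subst hpq
          apply hsing p hp
          ext z; constructor
          · intro hz; simpa using hGpq z hz
          · intro hz; simp at hz; rw [hz]; exact h1
        · have hGe : G = {p, q} := by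
            ext z; constructor
            · intro hz; simpa using hGpq z hz
            · intro hz; simp at hz; rcases hz with rfl | rfl <;> assumption
          have hGF : G ∈ L.faces := L.down_closed hF (Finset.filter_subset _ _) hne
          have hadpq : Ad L p q := ⟨hpq, hGe ▸ hGF⟩
          refine ⟨hGF, by simp [hG], by simp [hG], ?_, ?_, ?_⟩
          · rw [hGe]; exact flag_tri hL hf hp.1 hq.1 hadpq
          · rw [hGe]; exact flag_tri hL hf hp.2 hq.2 hadpq
          · intro v hv
            rcases hGpq v hv with rfl | rfl
            · exact ⟨hp.1.2, hp.2.2⟩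
            · exact ⟨hq.1.2, hq.2.2⟩
      · apply hsing p hp
        ext z; constructor
        · intro hz
          rcases hGpq z hz with rfl | rfl
          · simp
          · exact absurd hz h2
        · intro hz; simp at hz; rw [hz]; exact h1
    · apply hsing q hq
      obtain ⟨r, hr⟩ := hne
      have hrq : r = q := by
        rcases hGpq r hr with rfl | rfl
        · exact absurd hr h1
        · rfl
      ext z; constructor
      · intro hz
        rcases hGpq z hz with rfl | rfl
        · exact absurd hz h1
        · simp
      · intro hz; simp at hz; rw [hz, ← hrq]; exact hr
  have hFne := L.nonempty_of_mem_faces hF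
  by_cases hGe : G.Nonempty
  · have hz := hGz hGe
    by_cases h1 : t ∈ F
    · have h2 : t' ∉ F := fun h => hboth ⟨h1, h⟩
      left; right; refine ⟨G, hz, ?_⟩
      ext z; simp only [hG, Finset.mem_insert, Finset.mem_filter]
      constructor
      · rintro (rfl | h)
        · exact h1
        · exact h.1
      · intro h
        by_cases hzt : z = t
        · exact Or.inl hzt
        · exact Or.inr ⟨h, hzt, fun e => h2 (e ▸ h)⟩
    · by_cases h2 : t' ∈ F
      · right; refine ⟨G, hz, ?_⟩
        ext z; simp only [hG, Finset.mem_insert, Finset.mem_filter]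
        constructor
        · rintro (rfl | h)
          · exact h2
          · exact h.1
        · intro h
          by_cases hzt : z = t'
          · exact Or.inl hzt
          · exact Or.inr ⟨h, fun e => h1 (e ▸ h), hzt⟩
      · left; left; left
        have : G = F := by
          ext z; simp only [hG, Finset.mem_filter]
          exact ⟨fun h => h.1, fun h => ⟨h, fun e => h1 (e ▸ h), fun e => h2 (e ▸ h)⟩⟩
        rwa [this] at hz
  · have hem : ∀ v ∈ F, v = t ∨ v = t' := by
      intro v hvF
      by_contra! h
      exact hGe ⟨v, by simp only [hG, Finset.mem_filter]; exact ⟨hvF, h⟩⟩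
    obtain ⟨r, hr⟩ := hFne
    left; left; right
    by_cases h1 : t ∈ F
    · left; ext z; simp only [Finset.mem_singleton]
      constructor
      · intro h
        rcases hem z h with e | e
        · exact e
        · exact absurd ⟨h1, e ▸ h⟩ hboth
      · rintro rfl; exact h1
    · right; ext z; simp only [Finset.mem_singleton]
      have h2 : t' ∈ F := by
        rcases hem r hr with e | e
        · exact absurd (e ▸ hr) h1
        · exact e ▸ hr
      constructor
      · intro h
        rcases hem z h with e | e
        · exact absurd (e ▸ h) h1
        · exact e
      · rintro rfl; exact h2

theorem mem_can4 (hL : IsLabeledS2 L m) (hf : MetricFlag L m) {t t' p q r s : E3} {F : Finset E3}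
    (hF : F ∈ L.faces) (htt : t ≠ t') (hn : ¬ Ad L t t')
    (hp : p ∈ WW L m t t') (hq : q ∈ WW L m t t') (hr : r ∈ WW L m t t') (hs : s ∈ WW L m t t')
    (hpr : ¬ Ad L p r) (hqs : ¬ Ad L q s)
    (hv : ∀ v ∈ F, v = t ∨ v = t' ∨ v = p ∨ v = q ∨ v = r ∨ v = s) : F ∈ can L m t t' := by
  have key : ∀ x y : E3, ¬ Ad L x y → x ∈ F → y ∈ F → x = y := by
    intro x y h hx hy
    by_contra hxy
    refine h ⟨hxy, L.down_closed hF ?_ (by simp)⟩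
    intro z hz; simp at hz; rcases hz with rfl | rfl <;> assumption
  have k1 := key p r hpr
  have k2 := key q s hqs
  obtain ⟨x, hx, hxv⟩ : ∃ x ∈ WW L m t t', ∀ v ∈ F, v = p ∨ v = r → v = x := by
    by_cases h1 : p ∈ F
    · refine ⟨p, hp, ?_⟩
      rintro v hvF (e | e)
      · exact e
      · rw [e] at hvF ⊢; exact (k1 h1 hvF).symm
    · refine ⟨r, hr, ?_⟩
      rintro v hvF (e | e)
      · rw [e] at hvF; exact absurd hvF h1
      · exact e
  obtain ⟨y, hy, hyv⟩ : ∃ x ∈ WW L m t t', ∀ v ∈ F, v = q ∨ v = s → v = x := by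
    by_cases h1 : q ∈ F
    · refine ⟨q, hq, ?_⟩
      rintro v hvF (e | e)
      · exact e
      · rw [e] at hvF ⊢; exact (k2 h1 hvF).symm
    · refine ⟨s, hs, ?_⟩
      rintro v hvF (e | e)
      · rw [e] at hvF; exact absurd hvF h1
      · exact e
  refine mem_can hL hf hF htt hn hx hy ?_
  intro v hvF
  rcases hv v hvF with e | e | e | e | e | e
  · exact Or.inl e
  · exact Or.inr (Or.inl e)
  · exact Or.inr (Or.inr (Or.inl (hxv v hvF (Or.inl e))))
  · exact Or.inr (Or.inr (Or.inr (hyv v hvF (Or.inl e))))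
  · exact Or.inr (Or.inr (Or.inl (hxv v hvF (Or.inr e))))
  · exact Or.inr (Or.inr (Or.inr (hyv v hvF (Or.inr e))))

theorem edge_mem_can (hL : IsLabeledS2 L m) (hf : MetricFlag L m) {t t' p q : E3}
    (htt : t ≠ t') (hn : ¬ Ad L t t') (hp : p ∈ VV (can L m t t')) (hq : q ∈ VV (can L m t t'))
    (h : Ad L p q) : ({p, q} : Finset E3) ∈ can L m t t' := by
  rw [mem_VV_can] at hp hq
  by_cases hp' : p ∈ WW L m t t'
  · by_cases hq' : q ∈ WW L m t t'
    · exact mem_can hL hf h.2 htt hn hp' hq' (by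
        intro v hv
        rw [Finset.mem_insert, Finset.mem_singleton] at hv
        rcases hv with rfl | rfl <;> tauto)
    · exact mem_can hL hf h.2 htt hn hp' hp' (by
        intro v hv
        rw [Finset.mem_insert, Finset.mem_singleton] at hv
        rcases hv with rfl | rfl <;> tauto)
  · by_cases hq' : q ∈ WW L m t t'
    · exact mem_can hL hf h.2 htt hn hq' hq' (by
        intro v hv
        rw [Finset.mem_insert, Finset.mem_singleton] at hv
        rcases hv with rfl | rfl <;> tauto)
    · exfalso
      have e2 := h.symm
      rcases hp with rfl | rfl | h1
      · rcases hq with rfl | rfl | h2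
        · exact h.1 rfl
        · exact hn h
        · exact hq' h2
      · rcases hq with rfl | rfl | h2
        · exact hn e2
        · exact h.1 rfl
        · exact hq' h2
      · exact hp' h1

theorem circ_of_euclid (hL : IsLabeledS2 L m) (hf : MetricFlag L m) {v : Fin 4 → E3}
    (hv : IsEuclidean4Circuit L m v) : Circ L m (v 0) (v 1) (v 2) (v 3) := by
  obtain ⟨hi, he, hm, hn⟩ := hv
  have ad : ∀ i : Fin 4, Ad2 L m (v i) (v (i + 1)) := fun i =>
    ⟨⟨fun h => by have := hi h; fin_cases i <;> simp at this, he i⟩, hm i⟩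
  have a0 : Ad2 L m (v 0) (v 1) := ad 0
  have a1 : Ad2 L m (v 1) (v 2) := ad 1
  have a2 : Ad2 L m (v 2) (v 3) := ad 2
  have a3 : Ad2 L m (v 3) (v 0) := ad 3
  refine ⟨a0, a1, a2, a3, fun h => by simpa using hi h, fun h => by simpa using hi h, ?_, ?_⟩
  · intro h
    apply hn; left
    constructor
    · have := flag_tri hL hf (a0.symm hL) a1 h
      rwa [Finset.insert_comm] at this
    · have := flag_tri hL hf a3 (a2.symm hL) h
      rw [Finset.insert_comm, Finset.pair_comm (v 3) (v 2)] at this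
      exact this
  · intro h
    apply hn; right
    constructor
    · have := flag_tri hL hf (a1.symm hL) a2 h
      rwa [Finset.insert_comm] at this
    · exact flag_tri hL hf a0 (a3.symm hL) h

end Comb

end CoxOrb
namespace CoxOrb

section Circuits

variable {L : SimplicialComplex ℝ E3} {m : E3 → E3 → ℕ}

theorem k33 (hL : IsLabeledS2 L m)
    {a0 a1 a2 b0 b1 b2 : E3} (ha : a0 ≠ a1) (ha' : a0 ≠ a2) (ha'' : a1 ≠ a2)
    (hb : b0 ≠ b1) (hb' : b0 ≠ b2) (hb'' : b1 ≠ b2)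
    (h00 : Ad L a0 b0) (h01 : Ad L a0 b1) (h02 : Ad L a0 b2)
    (h10 : Ad L a1 b0) (h11 : Ad L a1 b1) (h12 : Ad L a1 b2)
    (h20 : Ad L a2 b0) (h21 : Ad L a2 b1) (h22 : Ad L a2 b2) : False := by
  refine no_k33 L m hL (B := {a2, b2}) ha hb h22.1 h00 h01 h02 h10 h11 h12 h20 h21
    (Relation.ReflTransGen.single ⟨h22, by simp, by simp⟩) (by simp) (by simp) ?_ ?_ ?_ ?_
  · rintro (h | h)
    · exact ha' h
    · exact h02.1 h
  · rintro (h | h)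
    · exact ha'' h
    · exact h12.1 h
  · rintro (h | h)
    · exact h20.1 h.symm
    · exact hb' h
  · rintro (h | h)
    · exact h21.1 h.symm
    · exact hb'' h

theorem oct_nonadj (hL : IsLabeledS2 L m) {a b c d t t' : E3} (hC : Circ L m a b c d)
    (ha : a ∈ WW L m t t') (hb : b ∈ WW L m t t') (hc : c ∈ WW L m t t') (hd : d ∈ WW L m t t') :
    ¬ Ad L t t' := by
  intro h
  obtain ⟨ab, bc, cd, da, nac, nbd, -, -⟩ := hC
  exact k33 hL (a0 := a) (a1 := c) (a2 := t) (b0 := b) (b1 := d) (b2 := t') nac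
    ha.1.1.1.symm hc.1.1.1.symm nbd hb.2.1.1.symm hd.2.1.1.symm
    ab.1 da.1.symm ha.2.1.symm bc.1.symm cd.1 hc.2.1.symm hb.1.1 hd.1.1 h

theorem oct_WW (hL : IsLabeledS2 L m) {a b c d t t' x : E3} (hC : Circ L m a b c d) (htt : t ≠ t')
    (ha : a ∈ WW L m t t') (hb : b ∈ WW L m t t') (hc : c ∈ WW L m t t') (hd : d ∈ WW L m t t')
    (hx : x ∈ WW L m t t') : x = a ∨ x = b ∨ x = c ∨ x = d := by
  by_contra! h
  obtain ⟨ab, bc, cd, da, nac, nbd, -, -⟩ := hC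
  refine no_k33 L m hL (B := {t, x, t'}) (a0 := a) (a1 := c) (a2 := t) (b0 := b) (b1 := d)
    (b2 := t') nac nbd htt
    ab.1 da.1.symm ha.2.1.symm bc.1.symm cd.1 hc.2.1.symm hb.1.1 hd.1.1
    ((Relation.ReflTransGen.single ⟨hx.1.1, by simp, by simp⟩).tail
      ⟨hx.2.1.symm, by simp, by simp⟩) (by simp) (by simp) ?_ ?_ ?_ ?_
  · rintro (e | e | e)
    · exact ha.1.1.1 e.symm
    · exact h.1 e.symm
    · exact ha.2.1.1 e.symm
  · rintro (e | e | e)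
    · exact hc.1.1.1 e.symm
    · exact h.2.2.1 e.symm
    · exact hc.2.1.1 e.symm
  · rintro (e | e | e)
    · exact hb.1.1.1 e.symm
    · exact h.2.1 e.symm
    · exact hb.2.1.1 e.symm
  · rintro (e | e | e)
    · exact hd.1.1.1 e.symm
    · exact h.2.2.2 e.symm
    · exact hd.2.1.1 e.symm

/-- An antipodal pair of a circuit with one suspension point. -/
theorem antip {a c s s' : E3} (hn : ¬ Ad L a c) (hac : a ≠ c)
    (ha : a = s ∨ a = s') (hc : c ∈ VV (can L m s s')) : can L m s s' = can L m a c := by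
  rw [mem_VV_can] at hc
  rcases ha with rfl | rfl
  · rcases hc with h | h | h
    · exact absurd h.symm hac
    · rw [h]
    · exact absurd h.1.1 hn
  · rcases hc with h | h | h
    · rw [h, can_comm]
    · exact absurd h.symm hac
    · exact absurd h.2.1 hn

theorem circ_class {a b c d s s' : E3} (hC : Circ L m a b c d)
    (ha : a ∈ VV (can L m s s')) (hb : b ∈ VV (can L m s s')) (hc : c ∈ VV (can L m s s'))
    (hd : d ∈ VV (can L m s s')) :
    (a ∈ WW L m s s' ∧ b ∈ WW L m s s' ∧ c ∈ WW L m s s' ∧ d ∈ WW L m s s') ∨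
    can L m s s' = can L m a c ∨ can L m s s' = can L m b d := by
  obtain ⟨ab, bc, cd, da, nac, nbd, hac, hbd⟩ := hC
  have key : ∀ p q : E3, ¬ Ad L p q → p ≠ q → p ∈ VV (can L m s s') → q ∈ VV (can L m s s') →
      p ∈ WW L m s s' ∨ can L m s s' = can L m p q := by
    intro p q h1 h2 hp hq
    rcases mem_VV_can.1 hp with h | h | h
    · exact Or.inr (antip h1 h2 (Or.inl h) hq)
    · exact Or.inr (antip h1 h2 (Or.inr h) hq)
    · exact Or.inl h
  rcases key a c hac nac ha hc with h1 | h1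
  · rcases key c a (fun h => hac h.symm) nac.symm hc ha with h2 | h2
    · rcases key b d hbd nbd hb hd with h3 | h3
      · rcases key d b (fun h => hbd h.symm) nbd.symm hd hb with h4 | h4
        · exact Or.inl ⟨h1, h3, h2, h4⟩
        · right; right; rw [h4, can_comm]
      · exact Or.inr (Or.inr h3)
    · right; left; rw [h2, can_comm]
  · exact Or.inr (Or.inl h1)

theorem A1diag (hL : IsLabeledS2 L m) (hf : MetricFlag L m) {a b c d t t' : E3}
    (hC : Circ L m a b c d) (htt : t ≠ t')
    (h1 : IsInfMaxRASusp L m (can L m t t')) (h2 : IsInfMaxRASusp L m (can L m a c))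
    (ha : a ∈ WW L m t t') (hb : b ∈ WW L m t t') (hc : c ∈ WW L m t t') (hd : d ∈ WW L m t t') :
    can L m t t' = can L m a c := by
  have hn := oct_nonadj hL hC ha hb hc hd
  obtain ⟨ab, bc, cd, da, nac, nbd, hac, hbd⟩ := hC
  have hC' : Circ L m b t d t' :=
    ⟨hb.1.symm hL, hd.1, hd.2.symm hL, hb.2, nbd, htt, hbd, hn⟩
  symm
  apply infmax_eq h2 h1
  intro F hF
  refine mem_can4 hL hf (infmax_faces h2 hF) htt hn ha hb hc hd hac hbd ?_
  intro v hv
  rcases can_mem hF hv with e | e | e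
  · simp [e]
  · simp [e]
  · rcases oct_WW hL hC' nac ⟨ab, bc.symm hL⟩ ⟨ha.1.symm hL, hc.1.symm hL⟩
      ⟨da.symm hL, cd⟩ ⟨ha.2.symm hL, hc.2.symm hL⟩ e with e | e | e | e <;> simp [e]

theorem A1 (hL : IsLabeledS2 L m) (hf : MetricFlag L m) {a b c d t t' : E3}
    {T : Set (Finset E3)}
    (hC : Circ L m a b c d) (htt : t ≠ t')
    (h1 : IsInfMaxRASusp L m (can L m t t')) (h2 : IsInfMaxRASusp L m T)
    (ha : a ∈ WW L m t t') (hb : b ∈ WW L m t t') (hc : c ∈ WW L m t t') (hd : d ∈ WW L m t t')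
    (ha' : a ∈ VV T) (hb' : b ∈ VV T) (hc' : c ∈ VV T) (hd' : d ∈ VV T) :
    can L m t t' = T := by
  obtain ⟨s, s', hss, rfl⟩ := infmax_can h2
  rcases circ_class hC ha' hb' hc' hd' with ⟨ka, kb, kc, kd⟩ | h | h
  · have key : ∀ r : E3, Ad L r a → Ad L r b → Ad L r c → r = t ∨ r = t' := by
      intro r ra rb rc
      by_contra! hr
      exact k33 hL (a0 := t) (a1 := t') (a2 := r) (b0 := a) (b1 := b) (b2 := c) htt
        hr.1.symm hr.2.symm hC.1.1.1 hC.2.2.2.2.1 hC.2.1.1.1 ha.1.1 hb.1.1 hc.1.1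
        ha.2.1 hb.2.1 hc.2.1 ra rb rc
    rcases key s ka.1.1 kb.1.1 kc.1.1 with rfl | rfl
    · rcases key s' ka.2.1 kb.2.1 kc.2.1 with rfl | rfl
      · exact absurd rfl hss
      · rfl
    · rcases key s' ka.2.1 kb.2.1 kc.2.1 with rfl | rfl
      · exact can_comm _ _
      · exact absurd rfl hss
  · rw [h] at h2 ⊢
    exact A1diag hL hf hC htt h1 h2 ha hb hc hd
  · rw [h] at h2 ⊢
    exact A1diag hL hf hC.rot htt h1 h2 hb hc hd ha

theorem A2sub (hL : IsLabeledS2 L m) (hf : MetricFlag L m) {a b c d w : E3}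
    (hC : Circ L m a b c d)
    (h1 : IsInfMaxRASusp L m (can L m a c)) (h2 : IsInfMaxRASusp L m (can L m b d))
    (hw : w ∈ WW L m a c)
    (hs : ∀ y ∈ WW L m b d, y = a ∨ y = c ∨ y = w) : can L m b d = can L m a c := by
  obtain ⟨ab, bc, cd, da, nac, nbd, hac, hbd⟩ := hC
  apply infmax_eq h2 h1
  intro F hF
  refine mem_can4 hL hf (infmax_faces h2 hF) nac hac (p := b) (q := w) (r := d) (s := w)
    ⟨ab, bc.symm hL⟩ hw ⟨da.symm hL, cd⟩ hw hbd (fun h => h.1 rfl) ?_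
  intro v hv
  rcases can_mem hF hv with e | e | e
  · simp [e]
  · simp [e]
  · rcases hs v e with e | e | e <;> simp [e]

theorem A2 (hL : IsLabeledS2 L m) (hf : MetricFlag L m) {a b c d : E3}
    (hC : Circ L m a b c d)
    (h1 : IsInfMaxRASusp L m (can L m a c)) (h2 : IsInfMaxRASusp L m (can L m b d)) :
    can L m a c = can L m b d ∨ Disjoint (WW L m a c) (WW L m b d) := by
  by_cases hdis : Disjoint (WW L m a c) (WW L m b d)
  · exact Or.inr hdis
  left
  obtain ⟨w, hw1, hw2⟩ := Set.not_disjoint_iff.1 hdis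
  by_cases hy : ∀ y ∈ WW L m b d, y = a ∨ y = c ∨ y = w
  · exact (A2sub hL hf hC h1 h2 hw1 hy).symm
  by_cases hx : ∀ x ∈ WW L m a c, x = b ∨ x = d ∨ x = w
  · rw [can_comm a c, WW_comm a c] at *
    exact A2sub hL hf hC.rot h2 h1 hw2 hx
  push Not at hx hy
  obtain ⟨x, hx, xb, xd, xw⟩ := hx
  obtain ⟨y, hy, ya, yc, yw⟩ := hy
  have hC0 := hC
  obtain ⟨ab, bc, cd, da, nac, nbd, hac, hbd⟩ := hC
  have hxy : x = y := by
    by_contra hxy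
    exact no_k5 L m hL nac nbd hw1.1.1.symm hw2.1.1.symm hw1.2.1.symm hw2.2.1.symm ab.1 bc.1 cd.1
      da.1 hx.1.1 hx.2.1.symm hy.1.1 hy.2.1.symm xw yw hxy xb xd ya yc
  subst hxy
  have hn : ¬ Ad L w x := oct_nonadj hL hC0 ⟨hw1.1.symm hL, hx.1.symm hL⟩
    ⟨hw2.1.symm hL, hy.1.symm hL⟩ ⟨hw1.2.symm hL, hx.2.symm hL⟩ ⟨hw2.2.symm hL, hy.2.symm hL⟩
  have hC' : Circ L m b w d x :=
    ⟨hw2.1, hw2.2.symm hL, hy.2, hy.1.symm hL, nbd, xw.symm, hbd, hn⟩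
  exact A1 hL hf hC' nac h1 h2 ⟨ab, bc.symm hL⟩ hw1 ⟨da.symm hL, cd⟩ hx
    (mem_VV_can.2 (Or.inl rfl)) (mem_VV_can.2 (Or.inr (Or.inr hw2)))
    (mem_VV_can.2 (Or.inr (Or.inl rfl))) (mem_VV_can.2 (Or.inr (Or.inr hy)))

/-- Combinatorial form of the Seifert relation. -/
def Rel (L : SimplicialComplex ℝ E3) (m : E3 → E3 → ℕ) (S T : Set (Finset E3)) : Prop :=
  ∃ a b c d, Circ L m a b c d ∧ S = can L m a c ∧ T = can L m b d ∧
    Disjoint (WW L m a c) (WW L m b d)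

theorem Rel.symm {S T : Set (Finset E3)} (h : Rel L m S T) : Rel L m T S := by
  obtain ⟨a, b, c, d, hC, rfl, rfl, h⟩ := h
  exact ⟨b, c, d, a, hC.rot, rfl, can_comm _ _, by rw [WW_comm c a]; exact h.symm⟩

theorem A3 (hL : IsLabeledS2 L m) (hf : MetricFlag L m) {a b c d : E3}
    {S T : Set (Finset E3)} (hC : Circ L m a b c d)
    (h1 : IsInfMaxRASusp L m S) (h2 : IsInfMaxRASusp L m T)
    (ha : a ∈ VV S) (hb : b ∈ VV S) (hc : c ∈ VV S) (hd : d ∈ VV S)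
    (ha' : a ∈ VV T) (hb' : b ∈ VV T) (hc' : c ∈ VV T) (hd' : d ∈ VV T) :
    S = T ∨ Rel L m S T := by
  obtain ⟨s, s', hss, rfl⟩ := infmax_can h1
  obtain ⟨t, t', htt, rfl⟩ := infmax_can h2
  have hC' : Circ L m b c d a := hC.rot
  rcases circ_class hC ha hb hc hd with ⟨ka, kb, kc, kd⟩ | h | h
  · exact Or.inl (A1 hL hf hC hss h1 h2 ka kb kc kd ha' hb' hc' hd')
  · rcases circ_class hC ha' hb' hc' hd' with ⟨ka, kb, kc, kd⟩ | h' | h'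
    · exact Or.inl (A1 hL hf hC htt h2 h1 ka kb kc kd ha hb hc hd).symm
    · exact Or.inl (h.trans h'.symm)
    · rw [h] at h1 ⊢; rw [h'] at h2 ⊢
      rcases A2 hL hf hC h1 h2 with e | e
      · exact Or.inl e
      · exact Or.inr ⟨a, b, c, d, hC, rfl, rfl, e⟩
  · rcases circ_class hC ha' hb' hc' hd' with ⟨ka, kb, kc, kd⟩ | h' | h'
    · exact Or.inl (A1 hL hf hC htt h2 h1 ka kb kc kd ha hb hc hd).symm
    · rw [h] at h1 ⊢; rw [h'] at h2 ⊢
      rcases A2 hL hf hC h2 h1 with e | e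
      · exact Or.inl e.symm
      · exact Or.inr (Rel.symm ⟨a, b, c, d, hC, rfl, rfl, e⟩)
    · exact Or.inl (h.trans h'.symm)

theorem Rel.inter (hL : IsLabeledS2 L m) {a b c d : E3} (hC : Circ L m a b c d)
    (hd : Disjoint (WW L m a c) (WW L m b d)) {v : E3} :
    (v ∈ VV (can L m a c) ∧ v ∈ VV (can L m b d)) ↔ v = a ∨ v = b ∨ v = c ∨ v = d := by
  obtain ⟨ab, bc, cd, da, nac, nbd, hac, hbd⟩ := hC
  constructor
  · rintro ⟨h1, h2⟩
    rw [mem_VV_can] at h1 h2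
    rcases h1 with e | e | e
    · exact Or.inl e
    · exact Or.inr (Or.inr (Or.inl e))
    · rcases h2 with e' | e' | e'
      · exact Or.inr (Or.inl e')
      · exact Or.inr (Or.inr (Or.inr e'))
      · exact absurd e' (Set.disjoint_left.1 hd e)
  · have b1 : b ∈ WW L m a c := ⟨ab, bc.symm hL⟩
    have d1 : d ∈ WW L m a c := ⟨da.symm hL, cd⟩
    have a1 : a ∈ WW L m b d := ⟨ab.symm hL, da⟩
    have c1 : c ∈ WW L m b d := ⟨bc, cd.symm hL⟩
    rintro (rfl | rfl | rfl | rfl) <;> simp only [mem_VV_can] <;> simp [*]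

theorem circ_inj {a b c d : E3} (hC : Circ L m a b c d) :
    Function.Injective (![a, b, c, d] : Fin 4 → E3) := by
  obtain ⟨ab, bc, cd, da, nac, nbd, hac, hbd⟩ := hC
  have e1 := ab.1.1
  have e2 := bc.1.1
  have e3 := cd.1.1
  have e4 := da.1.1
  have e1' := ab.1.1.symm
  have e2' := bc.1.1.symm
  have e3' := cd.1.1.symm
  have e4' := da.1.1.symm
  have e5 := nac.symm
  have e6 := nbd.symm
  intro i j h
  fin_cases i <;> fin_cases j <;> simp at h ⊢ <;> contradiction

theorem Rel.seifert (hL : IsLabeledS2 L m) (hf : MetricFlag L m) {S T : Set (Finset E3)}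
    (h1 : IsInfMaxRASusp L m S) (h2 : IsInfMaxRASusp L m T) (h : Rel L m S T) :
    SeifertRel L m S T := by
  refine ⟨h1, h2, ?_⟩
  obtain ⟨a, b, c, d, hC, rfl, rfl, hdis⟩ := h
  have hC0 := hC
  obtain ⟨ab, bc, cd, da, nac, nbd, hac, hbd⟩ := hC
  have b1 : b ∈ WW L m a c := ⟨ab, bc.symm hL⟩
  have d1 : d ∈ WW L m a c := ⟨da.symm hL, cd⟩
  have a1 : a ∈ WW L m b d := ⟨ab.symm hL, da⟩
  have c1 : c ∈ WW L m b d := ⟨bc, cd.symm hL⟩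
  refine ⟨![a, b, c, d], ⟨circ_inj hC0, ?_, ?_, ?_⟩, ?_⟩
  · intro i; fin_cases i
    · exact ab.1.2
    · exact bc.1.2
    · exact cd.1.2
    · exact da.1.2
  · intro i; fin_cases i
    · exact ab.2
    · exact bc.2
    · exact cd.2
    · exact da.2
  · rintro (⟨h, -⟩ | ⟨h, -⟩)
    · refine hac ⟨nac, L.down_closed h ?_ (by simp)⟩
      intro z hz; simp at hz ⊢; rcases hz with rfl | rfl <;> simp
    · refine hbd ⟨nbd, L.down_closed h ?_ (by simp)⟩
      intro z hz; simp at hz ⊢; rcases hz with rfl | rfl <;> simp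
  · ext F
    constructor
    · rintro ⟨hF1, hF2⟩
      have hv : ∀ v ∈ F, v = a ∨ v = b ∨ v = c ∨ v = d := fun v hv =>
        (Rel.inter hL hC0 hdis).1 ⟨can_VV hF1 hv, can_VV hF2 hv⟩
      have hFL := infmax_faces h1 hF1
      have key : ∀ p q : E3, p ≠ q → ¬ Ad L p q → p ∈ F → q ∉ F := by
        intro p q h1 h2 hp hq
        refine h2 ⟨h1, L.down_closed hFL ?_ (by simp)⟩
        intro z hz; simp at hz; rcases hz with rfl | rfl <;> assumption
      have fin2 : ∀ p q : E3, p ∈ F → q ∈ F → (∀ v ∈ F, v = p ∨ v = q) → F = {p, q} := by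
        intro p q hp hq h
        ext z; constructor
        · intro hz; simpa using h z hz
        · intro hz; simp at hz; rcases hz with rfl | rfl <;> assumption
      have fin1 : ∀ p : E3, p ∈ F → (∀ v ∈ F, v = p) → F = {p} := by
        intro p hp h
        ext z; constructor
        · intro hz; simpa using h z hz
        · intro hz; simp at hz; rw [hz]; exact hp
      have kac := key a c nac hac
      have kbd := key b d nbd hbd
      have hne := L.nonempty_of_mem_faces hFL
      have hz : ∀ (p : E3), p ∉ F → ∀ v ∈ F, v ≠ p := by
        rintro p hp v hv rfl; exact hp hv
      by_cases ia : a ∈ F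
      · have nc := hz c (kac ia)
        by_cases ib : b ∈ F
        · have nd := hz d (kbd ib)
          refine Or.inr ⟨0, fin2 a b ia ib fun v hvF => ?_⟩
          have := hv v hvF; have := nc v hvF; have := nd v hvF; tauto
        · have nb := hz b ib
          by_cases id : d ∈ F
          · refine Or.inr ⟨3, fin2 d a id ia fun v hvF => ?_⟩
            have := hv v hvF; have := nc v hvF; have := nb v hvF; tauto
          · have nd := hz d id
            refine Or.inl ⟨0, fin1 a ia fun v hvF => ?_⟩
            have := hv v hvF; have := nc v hvF; have := nb v hvF; have := nd v hvF; tauto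
      · have na := hz a ia
        by_cases ib : b ∈ F
        · have nd := hz d (kbd ib)
          by_cases ic : c ∈ F
          · refine Or.inr ⟨1, fin2 b c ib ic fun v hvF => ?_⟩
            have := hv v hvF; have := na v hvF; have := nd v hvF; tauto
          · have nc := hz c ic
            refine Or.inl ⟨1, fin1 b ib fun v hvF => ?_⟩
            have := hv v hvF; have := nc v hvF; have := na v hvF; have := nd v hvF; tauto
        · have nb := hz b ib
          by_cases ic : c ∈ F
          · by_cases id : d ∈ F
            · refine Or.inr ⟨2, fin2 c d ic id fun v hvF => ?_⟩
              have := hv v hvF; have := na v hvF; have := nb v hvF; tauto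
            · have nd := hz d id
              refine Or.inl ⟨2, fin1 c ic fun v hvF => ?_⟩
              have := hv v hvF; have := nb v hvF; have := na v hvF; have := nd v hvF; tauto
          · have nc := hz c ic
            have hall : ∀ v ∈ F, v = d := by
              intro v hvF
              have := hv v hvF; have := nb v hvF; have := na v hvF; have := nc v hvF; tauto
            obtain ⟨r, hr⟩ := hne
            exact Or.inl ⟨3, fin1 d (hall r hr ▸ hr) hall⟩
    · have va := (Rel.inter hL hC0 hdis).2 (Or.inl (rfl : a = a))
      have vb := (Rel.inter hL hC0 hdis).2 (Or.inr (Or.inl (rfl : b = b)))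
      have vc := (Rel.inter hL hC0 hdis).2 (Or.inr (Or.inr (Or.inl (rfl : c = c))))
      have vd := (Rel.inter hL hC0 hdis).2 (Or.inr (Or.inr (Or.inr (rfl : d = d))))
      have key : ∀ p q : E3, (p ∈ VV (can L m a c) ∧ p ∈ VV (can L m b d)) →
          (q ∈ VV (can L m a c) ∧ q ∈ VV (can L m b d)) → Ad L p q →
          ({p, q} : Finset E3) ∈ can L m a c ∩ can L m b d := fun p q hp hq h =>
        ⟨edge_mem_can hL hf nac hac hp.1 hq.1 h, edge_mem_can hL hf nbd hbd hp.2 hq.2 h⟩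
      rintro (⟨i, rfl⟩ | ⟨i, rfl⟩)
      · fin_cases i
        · exact va
        · exact vb
        · exact vc
        · exact vd
      · fin_cases i
        · exact key a b va vb ab.1
        · exact key b c vb vc bc.1
        · exact key c d vc vd cd.1
        · exact key d a vd va da.1

theorem circ_sub_VV {S : Set (Finset E3)} {v : Fin 4 → E3} (h : circuitComplex v ⊆ S) (i : Fin 4) :
    v i ∈ VV S := h (Or.inl ⟨i, rfl⟩)

theorem rel_of_seifert (hL : IsLabeledS2 L m) (hf : MetricFlag L m) {S T : Set (Finset E3)}
    (h : SeifertRel L m S T) : S = T ∨ Rel L m S T := by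
  obtain ⟨h1, h2, v, hv, he⟩ := h
  have s1 : circuitComplex v ⊆ S := fun F hF => (he ▸ hF : F ∈ S ∩ T).1
  have s2 : circuitComplex v ⊆ T := fun F hF => (he ▸ hF : F ∈ S ∩ T).2
  exact A3 hL hf (circ_of_euclid hL hf hv) h1 h2 (circ_sub_VV s1 _) (circ_sub_VV s1 _)
    (circ_sub_VV s1 _) (circ_sub_VV s1 _) (circ_sub_VV s2 _) (circ_sub_VV s2 _)
    (circ_sub_VV s2 _) (circ_sub_VV s2 _)

end Circuits

end CoxOrb
namespace CoxOrb

section Classes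

variable {L : SimplicialComplex ℝ E3} {m : E3 → E3 → ℕ}

/-- The graph whose components are the equivalence classes of suspensions. -/
def CG (L : SimplicialComplex ℝ E3) (m : E3 → E3 → ℕ) : SimpleGraph (Set (Finset E3)) where
  Adj S T := S ≠ T ∧ IsInfMaxRASusp L m S ∧ IsInfMaxRASusp L m T ∧ Rel L m S T
  symm := ⟨fun _ _ h => ⟨h.1.symm, h.2.2.1, h.2.1, h.2.2.2.symm⟩⟩
  loopless := ⟨fun _ h => h.1 rfl⟩

theorem reach_of_eqv (hL : IsLabeledS2 L m) (hf : MetricFlag L m) {S T : Set (Finset E3)}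
    (h : Relation.EqvGen (SeifertRel L m) S T) : (CG L m).Reachable S T := by
  induction h with
  | rel S T h =>
    by_cases hST : S = T
    · rw [hST]
    · rcases rel_of_seifert hL hf h with e | e
      · exact absurd e hST
      · exact SimpleGraph.Adj.reachable (G := CG L m) ⟨hST, h.1, h.2.1, e⟩
  | refl S => exact SimpleGraph.Reachable.refl S
  | symm S T _ ih => exact ih.symm
  | trans S T U _ _ ih1 ih2 => exact ih1.trans ih2

theorem eqv_of_reach (hL : IsLabeledS2 L m) (hf : MetricFlag L m) {S T : Set (Finset E3)}
    (h : (CG L m).Reachable S T) :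
    Relation.EqvGen (SeifertRel L m) S T ∧ (IsInfMaxRASusp L m S → IsInfMaxRASusp L m T) := by
  obtain ⟨w⟩ := h
  induction w with
  | nil => exact ⟨Relation.EqvGen.refl _, id⟩
  | cons h q ih =>
    exact ⟨(Relation.EqvGen.rel _ _ (h.2.2.2.seifert hL hf h.2.1 h.2.2.1)).trans _ _ _ ih.1,
      fun _ => ih.2 h.2.2.1⟩

theorem Rch.mono {A B : Set E3} (hAB : A ⊆ B) {x z : E3} (h : Rch L A x z) : Rch L B x z := by
  induction h with
  | refl => exact Relation.ReflTransGen.refl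
  | tail _ h2 ih => exact ih.tail ⟨h2.1, hAB h2.2.1, hAB h2.2.2⟩

theorem Rch.trunc {A B : Set E3} {x z : E3} (h : Rch L A x z) (hx : x ∉ B) :
    (∃ y ∈ B, y ∈ A ∧ Rch L A x y) ∨ (z ∉ B ∧ Rch L Bᶜ x z) := by
  induction h with
  | refl => exact Or.inr ⟨hx, Relation.ReflTransGen.refl⟩
  | tail h1 h2 ih =>
    rename_i y z
    rcases ih with ih | ⟨h3, h4⟩
    · exact Or.inl ih
    · by_cases hz : z ∈ B
      · exact Or.inl ⟨z, hz, h2.2.2, h1.tail h2⟩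
      · exact Or.inr ⟨hz, h4.tail ⟨h2.1, h3, hz⟩⟩

theorem sep_base (hL : IsLabeledS2 L m) {S T : Set (Finset E3)} (h : Rel L m S T) {x z : E3}
    (hx : x ∈ VV S) (hx' : x ∉ VV T) (hz : z ∈ VV T) (hz' : z ∉ VV S)
    (hr : Rch L {v | ¬ (v ∈ VV S ∧ v ∈ VV T)} x z) : False := by
  obtain ⟨a, b, c, d, hC, rfl, rfl, hd⟩ := h
  have va := (Rel.inter hL hC hd).2 (Or.inl (rfl : a = a))
  have vb := (Rel.inter hL hC hd).2 (Or.inr (Or.inl (rfl : b = b)))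
  have vc := (Rel.inter hL hC hd).2 (Or.inr (Or.inr (Or.inl (rfl : c = c))))
  have vd := (Rel.inter hL hC hd).2 (Or.inr (Or.inr (Or.inr (rfl : d = d))))
  have hxW : x ∈ WW L m a c := by
    rcases mem_VV_can.1 hx with e | e | e
    · exact absurd (e ▸ va.2) hx'
    · exact absurd (e ▸ vc.2) hx'
    · exact e
  have hzW : z ∈ WW L m b d := by
    rcases mem_VV_can.1 hz with e | e | e
    · exact absurd (e ▸ vb.1) hz'
    · exact absurd (e ▸ vd.1) hz'
    · exact e
  obtain ⟨ab, bc, cd, da, nac, nbd, hac, hbd⟩ := hC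
  exact no_k33 L m hL (a0 := b) (a1 := d) (a2 := x) (b0 := a) (b1 := c) (b2 := z) nbd nac
    (by rintro rfl; exact hx' hz) ab.1.symm bc.1 hzW.1.1 da.1 cd.1.symm hzW.2.1
    hxW.1.1.symm hxW.2.1.symm hr (fun h => hx' h.2) (fun h => hz' h.1)
    (fun h => h vb) (fun h => h vd) (fun h => h va) (fun h => h vc)

theorem nonadj_pair {a b c d u u' : E3} (hC : Circ L m a b c d) (hn : u ≠ u') (hu : ¬ Ad L u u')
    (h : u = a ∨ u = b ∨ u = c ∨ u = d) (h' : u' = a ∨ u' = b ∨ u' = c ∨ u' = d) :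
    (can L m u u' = can L m a c ∨ can L m u u' = can L m b d) := by
  obtain ⟨ab, bc, cd, da, nac, nbd, hac, hbd⟩ := hC
  rcases h with rfl | rfl | rfl | rfl <;> rcases h' with rfl | rfl | rfl | rfl
  · exact absurd rfl hn
  · exact absurd ab.1 hu
  · exact Or.inl rfl
  · exact absurd da.1.symm hu
  · exact absurd ab.1.symm hu
  · exact absurd rfl hn
  · exact absurd bc.1 hu
  · exact Or.inr rfl
  · exact Or.inl (can_comm _ _)
  · exact absurd bc.1.symm hu
  · exact absurd rfl hn
  · exact absurd cd.1 hu
  · exact absurd da.1 hu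
  · exact Or.inr (can_comm _ _)
  · exact absurd cd.1.symm hu
  · exact absurd rfl hn

theorem sep (hL : IsLabeledS2 L m) {S1 Sn : Set (Finset E3)} (q : (CG L m).Walk S1 Sn) :
    ∀ (S0 : Set (Finset E3)) (h : (CG L m).Adj S0 S1), (SimpleGraph.Walk.cons h q).IsPath →
    ∀ x z : E3, x ∈ VV S0 → x ∉ VV S1 → z ∈ VV Sn → ¬ (z ∈ VV S0 ∧ z ∈ VV S1) →
      ¬ Rch L {v | ¬ (v ∈ VV S0 ∧ v ∈ VV S1)} x z := by
  induction q with
  | nil =>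
    intro S0 h _ x z hx hx' hz hz' hr
    exact sep_base hL h.2.2.2 hx hx' hz (fun h => hz' ⟨h, hz⟩) hr
  | cons h2 q ih =>
    rename_i S1 S2 Sn
    intro S0 h hp x z hx hx' hz hz' hr
    rw [SimpleGraph.Walk.cons_isPath_iff] at hp
    have hne : S0 ≠ S2 := by
      rintro rfl
      apply hp.2
      simp
    rcases hr.trunc hx' with ⟨y, hy, hyA, hxy⟩ | ⟨hzS, hxz⟩
    · exact sep_base hL h.2.2.2 hx hx' hy (fun h => hyA ⟨h, hy⟩) hxy
    · have hxz' : Rch L {v | ¬ (v ∈ VV S1 ∧ v ∈ VV S2)} x z :=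
        Rch.mono (A := (VV S1)ᶜ) (B := {v | ¬ (v ∈ VV S1 ∧ v ∈ VV S2)})
          (fun v hv h => hv h.1) hxz
      have fin : ∀ e : E3, e ∈ VV S1 → Ad L e x → e ∈ VV S2 := by
        intro e he hex
        by_contra he'
        exact ih S1 h2 hp.1 e z he he' hz (fun h => hzS h.1)
          (Relation.ReflTransGen.head ⟨hex, fun h => he' h.2, fun h => hx' h.1⟩ hxz')
      obtain ⟨h01, i0, i1, a, b, c, d, hC, e0, e1, hd⟩ := h
      have va := (Rel.inter hL hC hd).2 (Or.inl (rfl : a = a))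
      have vc := (Rel.inter hL hC hd).2 (Or.inr (Or.inr (Or.inl (rfl : c = c))))
      have hxW : x ∈ WW L m a c := by
        rw [e0] at hx
        rw [e1] at hx'
        rcases mem_VV_can.1 hx with e | e | e
        · exact absurd (e ▸ va.2) hx'
        · exact absurd (e ▸ vc.2) hx'
        · exact e
      rw [← e1] at va vc
      have ka := fin a va.2 hxW.1.1
      have kc := fin c vc.2 hxW.2.1
      obtain ⟨h12, -, i2, a', b', c', d', hC', e1', e2', hd'⟩ := h2
      rw [e2'] at ka kc
      rw [e1'] at va vc
      have ja := (Rel.inter hL hC' hd').1 ⟨va.2, ka⟩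
      have jc := (Rel.inter hL hC' hd').1 ⟨vc.2, kc⟩
      rcases nonadj_pair hC' hC.2.2.2.2.1 hC.2.2.2.2.2.2.1 ja jc with e | e
      · exact h01 (e0.trans (e.trans e1'.symm))
      · exact hne (e0.trans (e.trans e2'.symm))

open Classical in
/-- The edges of the circuit `u` contained in `S`. -/
noncomputable def II (u : Fin 4 → E3) (S : Set (Finset E3)) : Finset (Fin 4) :=
  Finset.univ.filter fun i => ({u i, u (i + 1)} : Finset E3) ∈ S

theorem mem_II {u : Fin 4 → E3} {S : Set (Finset E3)} {i : Fin 4} :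
    i ∈ II u S ↔ ({u i, u (i + 1)} : Finset E3) ∈ S := by
  simp [II]

theorem edge_VV {S : Set (Finset E3)} (hS : IsInfMaxRASusp L m S) {p q : E3}
    (h : ({p, q} : Finset E3) ∈ S) : p ∈ VV S ∧ q ∈ VV S := by
  obtain ⟨t, t', -, rfl⟩ := infmax_can hS
  exact ⟨can_VV h (by simp), can_VV h (by simp)⟩

theorem edge_of_rel (hL : IsLabeledS2 L m) (hf : MetricFlag L m) {S T : Set (Finset E3)}
    (h : Rel L m S T) {p q : E3} (hp : p ∈ VV S) (hq : q ∈ VV S) (hpq : Ad L p q) :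
    ({p, q} : Finset E3) ∈ S := by
  obtain ⟨a, b, c, d, hC, rfl, rfl, -⟩ := h
  exact edge_mem_can hL hf hC.2.2.2.2.1 hC.2.2.2.2.2.2.1 hp hq hpq

theorem claimB (hL : IsLabeledS2 L m) (hf : MetricFlag L m) {u : Fin 4 → E3}
    (hu1 : ∀ j, Ad2 L m (u j) (u (j + 1)))
    (hu2 : ∀ j, u j ≠ u (j + 2) ∧ ¬ Ad L (u j) (u (j + 2)))
    {S T : Set (Finset E3)} (w : (CG L m).Walk S T) :
    w.IsPath → IsInfMaxRASusp L m T →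
    (∀ U, (CG L m).Reachable S U → (II u U).card ≤ (II u S).card) → II u T ⊆ II u S := by
  induction w with
  | nil => intro _ _ _; exact subset_rfl
  | cons h q ih =>
    rename_i S0 S1 T
    intro hp hT hmax
    by_cases hsub : II u S0 ⊆ II u S1
    · have heq := Finset.eq_of_subset_of_card_le hsub (hmax S1 (SimpleGraph.Adj.reachable h))
      rw [heq]
      refine ih ((SimpleGraph.Walk.cons_isPath_iff _ _).1 hp).1 hT ?_
      intro U hU
      rw [← heq]
      exact hmax U ((SimpleGraph.Adj.reachable h).trans hU)
    · obtain ⟨i, hi, hi'⟩ := Finset.not_subset.1 hsub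
      intro k hk
      by_contra hk'
      rw [mem_II] at hi hi' hk hk'
      have hi0 := edge_VV h.2.1 hi
      have hkT := edge_VV hT hk
      obtain ⟨j, hj, hj'⟩ : ∃ j, u j ∈ VV S0 ∧ u j ∉ VV S1 := by
        by_contra! hc
        exact hi' (edge_of_rel hL hf h.2.2.2.symm (hc _ hi0.1) (hc _ hi0.2) (hu1 i).1)
      obtain ⟨l, hl, hl'⟩ : ∃ l, u l ∈ VV T ∧ u l ∉ VV S0 := by
        by_contra! hc
        exact hk' (edge_of_rel hL hf h.2.2.2 (hc _ hkT.1) (hc _ hkT.2) (hu1 k).1)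
      have hsep := sep hL q S0 h hp (u j) (u l) hj hj' hl (fun h => hl' h.1)
      have hjK : u j ∈ {v | ¬ (v ∈ VV S0 ∧ v ∈ VV S1)} := fun h => hj' h.2
      have hlK : u l ∈ {v | ¬ (v ∈ VV S0 ∧ v ∈ VV S1)} := fun h => hl' h.1
      have hnad : ¬ Ad L (u j) (u l) := fun hA =>
        hsep (Relation.ReflTransGen.single ⟨hA, hjK, hlK⟩)
      have hmid : ∀ y, Ad L (u j) y → Ad L y (u l) → y ∈ VV S0 ∧ y ∈ VV S1 := by
        intro y h1 h2
        by_contra hy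
        exact hsep ((Relation.ReflTransGen.single ⟨h1, hjK, hy⟩).tail ⟨h2, hy, hlK⟩)
      have hjl : l = j + 2 := by
        have c0 : l ≠ j := by rintro rfl; exact hl' hj
        have c1 : l ≠ j + 1 := by rintro rfl; exact hnad (hu1 j).1
        have c3 : j ≠ l + 1 := by rintro rfl; exact hnad (hu1 l).1.symm
        revert c0 c1 c3
        clear * -
        revert j l
        decide
      have f1 : Ad2 L m (u j) (u (j + 1)) := hu1 j
      have f2 : Ad2 L m (u (j + 1)) (u l) := by
        have := hu1 (j + 1)
        rwa [show j + 1 + 1 = l by rw [hjl, add_assoc]; rfl] at this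
      have f3 : Ad2 L m (u l) (u (j + 3)) := by
        have := hu1 l
        rwa [show l + 1 = j + 3 by rw [hjl, add_assoc]; rfl] at this
      have f4 : Ad2 L m (u (j + 3)) (u j) := by
        have := hu1 (j + 3)
        rwa [show j + 3 + 1 = j by rw [add_assoc]; exact add_zero j] at this
      have g : u (j + 1) ≠ u (j + 3) ∧ ¬ Ad L (u (j + 1)) (u (j + 3)) := by
        have := hu2 (j + 1)
        rwa [show j + 1 + 2 = j + 3 by rw [add_assoc]; rfl] at this
      have m1 := hmid _ f1.1 f2.1
      have m3 := hmid _ f4.1.symm f3.1.symm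
      obtain ⟨h01, i0, i1, a, b, c, d, hC, e0, e1, hd⟩ := h
      rw [e0, e1] at m1 m3
      rcases nonadj_pair hC g.1 g.2 ((Rel.inter hL hC hd).1 m1) ((Rel.inter hL hC hd).1 m3)
        with e | e
      · apply hl'
        rw [e0, ← e]
        exact mem_VV_can.2 (Or.inr (Or.inr ⟨f2, f3.symm hL⟩))
      · apply hj'
        rw [e1, ← e]
        exact mem_VV_can.2 (Or.inr (Or.inr ⟨f1.symm hL, f4⟩))

theorem exists_member (hL : IsLabeledS2 L m) (hf : MetricFlag L m) {u : Fin 4 → E3}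
    (hu : IsEuclidean4Circuit L m u) {S : Set (Finset E3)} (hS : IsInfMaxRASusp L m S)
    (hsub : circuitComplex u ⊆
      ⋃₀ {T | IsInfMaxRASusp L m T ∧ Relation.EqvGen (SeifertRel L m) S T}) :
    ∃ T, IsInfMaxRASusp L m T ∧ Relation.EqvGen (SeifertRel L m) S T ∧ ∀ i, u i ∈ VV T := by
  have hC := circ_of_euclid hL hf hu
  obtain ⟨ab, bc, cd, da, nac, nbd, hac, hbd⟩ := hC
  have hu1 : ∀ j, Ad2 L m (u j) (u (j + 1)) := by
    intro j; fin_cases j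
    · exact ab
    · exact bc
    · exact cd
    · exact da
  have hu2 : ∀ j, u j ≠ u (j + 2) ∧ ¬ Ad L (u j) (u (j + 2)) := by
    intro j; fin_cases j
    · exact ⟨nac, hac⟩
    · exact ⟨nbd, hbd⟩
    · exact ⟨nac.symm, fun h => hac h.symm⟩
    · exact ⟨nbd.symm, fun h => hbd h.symm⟩
  obtain ⟨I, ⟨T, hT, rfl⟩, hmax⟩ := Set.exists_max_image
    (II u '' {T | (CG L m).Reachable S T}) Finset.card (Set.toFinite _)
    ⟨_, S, SimpleGraph.Reachable.refl S, rfl⟩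
  have hT' := eqv_of_reach hL hf hT
  refine ⟨T, hT'.2 hS, hT'.1, fun i => ?_⟩
  obtain ⟨U, ⟨hU, hSU⟩, hiU⟩ := hsub (Or.inr ⟨i, rfl⟩ : ({u i, u (i + 1)} : Finset E3) ∈ _)
  have hr := reach_of_eqv hL hf hSU
  obtain ⟨w, hw⟩ := (SimpleGraph.Reachable.symm hT |>.trans hr).exists_isPath
  have hsub' := claimB hL hf hu1 hu2 w hw hU (fun U' hU' =>
    hmax _ ⟨U', SimpleGraph.Reachable.trans hT hU', rfl⟩)
  exact (edge_VV (hT'.2 hS) (mem_II.1 (hsub' (mem_II.2 hiU)))).1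

end Classes

end CoxOrb

open CoxOrb

/-- If two Seifert subcomplexes of a metric flag labeled triangulation of the
2-sphere both contain a common Euclidean 4-circuit, then they are equal. -/
theorem seifert_eq_of_common_circuit
    (L : SimplicialComplex ℝ E3) (m : E3 → E3 → ℕ)
    (hL : IsLabeledS2 L m) (hflag : MetricFlag L m)
    (D₁ D₂ : Set (Finset E3))
    (h₁ : IsSeifertSubcomplex L m D₁) (h₂ : IsSeifertSubcomplex L m D₂)
    (v : Fin 4 → E3) (hv : IsEuclidean4Circuit L m v)
    (hsub₁ : circuitComplex v ⊆ D₁) (hsub₂ : circuitComplex v ⊆ D₂) :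
    D₁ = D₂ := by
  obtain ⟨S₁, hS₁, rfl⟩ := h₁
  obtain ⟨S₂, hS₂, rfl⟩ := h₂
  obtain ⟨T₁, hT₁, hST₁, hv₁⟩ := exists_member hL hflag hv hS₁ hsub₁
  obtain ⟨T₂, hT₂, hST₂, hv₂⟩ := exists_member hL hflag hv hS₂ hsub₂
  have hT : Relation.EqvGen (SeifertRel L m) T₁ T₂ := by
    rcases A3 hL hflag (circ_of_euclid hL hflag hv) hT₁ hT₂ (hv₁ _) (hv₁ _) (hv₁ _) (hv₁ _)
      (hv₂ _) (hv₂ _) (hv₂ _) (hv₂ _) with e | e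
    · rw [e]; exact Relation.EqvGen.refl _
    · exact Relation.EqvGen.rel _ _ (e.seifert hL hflag hT₁ hT₂)
  have hS : Relation.EqvGen (SeifertRel L m) S₁ S₂ :=
    (hST₁.trans _ _ _ hT).trans _ _ _ (hST₂.symm _ _)
  congr 1
  ext U
  exact ⟨fun h => ⟨h.1, (hS.symm _ _).trans _ _ _ h.2⟩, fun h => ⟨h.1, hS.trans _ _ _ h.2⟩⟩
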